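/- Let d ≥ 3 and 0 < α < d/2. For every ρ with max(1/α, 1) < ρ < d/(2α), ℙ-almost surely, log P₀(A(t) ≥ t^ρ, S_t = 0) / log t → −αρ + 1 − d/2 as t → ∞; that is, P₀(A(t) ≥ t^ρ, S_t = 0) = t^{−αρ+1−d/2+o(1)} as t → ∞. -/

import Mathlib

open MeasureTheory ProbabilityTheory Filter Set

noncomputable section

/-- `n`-step transition probabilities of the discrete-time simple random walk on `ℤ^m`. -/
def srwKernel (m : ℕ) : ℕ → (Fin m → ℤ) → (Fin m → ℤ) → ℝ
  | 0, x, y => if x = y then 1 else 0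
  | n + 1, x, y =>
      (∑ i : Fin m, (srwKernel m n (Function.update x i (x i + 1)) y
        + srwKernel m n (Function.update x i (x i - 1)) y)) / (2 * m)

/-- Transition kernel of the continuous-time simple random walk on `ℤ^m` which jumps to
each of its `2m` nearest neighbours at rate `1` (total jump rate `2m`). -/
def heatKernel (m : ℕ) (t : ℝ) (x y : Fin m → ℤ) : ℝ :=
  ∑' n : ℕ, Real.exp (-(2 * m) * t) * ((2 * m) * t) ^ n / n.factorial * srwKernel m n x y

/-- `(P, S)` is (a realization of) the continuous-time simple random walk on `ℤ^m`:
under `P x` the process `S` starts at `x`, has right-continuous (piecewise constant)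
paths, and its finite-dimensional distributions are given by the heat kernel. -/
structure IsCTSRW (m : ℕ) {Ω : Type*} [MeasurableSpace Ω]
    (P : (Fin m → ℤ) → Measure Ω) (S : ℝ → Ω → (Fin m → ℤ)) : Prop where
  prob : ∀ x, IsProbabilityMeasure (P x)
  meas : Measurable fun p : ℝ × Ω => S p.1 p.2
  start : ∀ x, ∀ᵐ ω ∂ P x, S 0 ω = x
  rightCont : ∀ x, ∀ᵐ ω ∂ P x, ∀ t : ℝ, 0 ≤ t →
    ∃ ε > (0 : ℝ), ∀ u, t ≤ u → u < t + ε → S u ω = S t ω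
  fdd : ∀ x (n : ℕ) (t : Fin (n + 1) → ℝ), 0 ≤ t 0 →
    (∀ i : Fin n, t i.castSucc ≤ t i.succ) →
    ∀ y : Fin (n + 1) → (Fin m → ℤ),
      (P x {ω | ∀ i, S (t i) ω = y i}).toReal
        = heatKernel m (t 0) x (y 0)
          * ∏ i : Fin n, heatKernel m (t i.succ - t i.castSucc) (y i.castSucc) (y i.succ)

/-- `z` is an i.i.d. nonnegative random scenery on `ℤ^d` whose common upper tail decays
like `r^{-α+o(1)}`. -/
structure IsScenery (d : ℕ) (α : ℝ) {Ω : Type*} [MeasurableSpace Ω]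
    (μ : Measure Ω) (z : (Fin d → ℤ) → Ω → ℝ) : Prop where
  prob : IsProbabilityMeasure μ
  meas : ∀ x, Measurable (z x)
  nonneg : ∀ x ω, 0 ≤ z x ω
  indep : iIndepFun z μ
  ident : ∀ x, IdentDistrib (z x) (z 0) μ μ
  tail : Tendsto (fun r : ℝ => Real.log (μ {ω | r < z 0 ω}).toReal / Real.log r)
    atTop (nhds (-α))

/-- The random walk in random scenery `A(t) = ∫₀ᵗ z(S_u) du`. -/
def rwrs {Ωz Ωw : Type*} (d : ℕ) (z : (Fin d → ℤ) → Ωz → ℝ)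
    (S : ℝ → Ωw → (Fin d → ℤ)) (t : ℝ) (ζ : Ωz) (ω : Ωw) : ℝ :=
  ∫ u in Set.Ioc (0 : ℝ) t, z (S u ω) ζ

end

open MeasureTheory ProbabilityTheory Filter Set

/-!
Upper bound: fix `s` slightly below `ρ`. To have `A(t) ≥ t^ρ` and `S_t = 0`, the walk must either
visit a site with `z > t^s` and be back at `0` at time `t`, or collect `t^ρ` from the scenery
truncated at `t^s`. The first event has probability at most `t^(-d/2)`, up to a constant, times the
sum of the Green function `G_{t+1}(0, y)` over the sites `y` with `z y > t^s`; since the Green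
function sums to `t + 1`, the average of this sum over the scenery is about `t * t^(-αs)`. The
second event is superpolynomially unlikely: in transient dimensions every site carries local time at
most `t^η` outside such an event, and then a Chernoff bound over the independent scenery applies,
because `ρ > max (1/α) 1`.

Lower bound: fix `s` slightly above `ρ`. Since `αs < d/2`, a box of side `√t` contains about
`t^(d/2 - αs)` sites with `z > t^s`, and each of them has expected local time about `t^(1 - d)` on
`S_t = 0`. Hence the time spent at such sites has expectation at least `t^(1 - d/2 - αs)` on
`S_t = 0`, while it is below `t^(2η)` outside a superpolynomially unlikely event; it therefore
exceeds `t^(ρ - s)`, which forces `A(t) ≥ t^ρ`, with probability about `t^(1 - d/2 - αs)`.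

Almost sure statements hold along `t = 2^k` by Borel–Cantelli and extend to all `t` by monotonicity.
-/

open scoped ENNReal

section Fourier

open Real

/-- The uniform probability measure on `(-π, π]`, over which lattice walks are expanded in
Fourier integrals. -/
noncomputable def torusMeasure : Measure ℝ := volume[|Ioc (-π) π]

instance : IsProbabilityMeasure torusMeasure :=
  cond_isProbabilityMeasure_of_finite (by simp [pi_pos]) (by simp)

lemma integral_torusMeasure (f : ℝ → ℝ) :
    ∫ θ, f θ ∂torusMeasure = (2 * π)⁻¹ * ∫ θ in Ioc (-π) π, f θ := by
  rw [torusMeasure, ProbabilityTheory.cond, integral_smul_measure, Real.volume_Ioc,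
    sub_neg_eq_add, ← two_mul, ENNReal.toReal_inv, ENNReal.toReal_ofReal (by positivity),
    smul_eq_mul]

lemma integrable_torusMeasure {f : ℝ → ℝ} (hf : Continuous f) : Integrable f torusMeasure :=
  Integrable.smul_measure hf.integrableOn_Ioc (by simp [pi_pos])

lemma integral_cos_intCast_mul_torusMeasure (k : ℤ) :
    ∫ θ, cos (k * θ) ∂torusMeasure = if k = 0 then 1 else 0 := by
  split_ifs with hk
  · simp [hk]
  · rw [integral_torusMeasure, ← intervalIntegral.integral_of_le (by linarith [pi_pos]),
      intervalIntegral.integral_comp_mul_left cos (Int.cast_ne_zero.mpr hk), integral_cos]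
    simp [sin_int_mul_pi]

/-- The real part `m⁻¹ ∑ⱼ cos θⱼ` of the characteristic function of one step of the simple random
walk on `ℤ^m`; the imaginary part vanishes by symmetry. -/
noncomputable def stepCharFun (m : ℕ) (θ : Fin m → ℝ) : ℝ := (∑ j, cos (θ j)) / m

lemma continuous_stepCharFun (m : ℕ) : Continuous (stepCharFun m) := by
  unfold stepCharFun
  fun_prop

lemma abs_stepCharFun_le_one (m : ℕ) (θ : Fin m → ℝ) : |stepCharFun m θ| ≤ 1 := by
  rw [stepCharFun, abs_div, Nat.abs_cast]
  refine div_le_one_of_le₀ ?_ m.cast_nonneg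
  calc |∑ j, cos (θ j)| ≤ ∑ j, |cos (θ j)| := Finset.abs_sum_le_sum_abs _ _
    _ ≤ ∑ _j : Fin m, (1 : ℝ) := Finset.sum_le_sum fun j _ => abs_cos_le_one (θ j)
    _ = m := by simp

/-- The real Fourier basis function `θ ↦ ∏ⱼ cos (kⱼ θⱼ)`. The walk is invariant under reflection
of each coordinate, so products of cosines can replace complex characters. -/
noncomputable def prodCos {m : ℕ} (k : Fin m → ℤ) (θ : Fin m → ℝ) : ℝ := ∏ j, cos (k j * θ j)

lemma continuous_prodCos {m : ℕ} (k : Fin m → ℤ) : Continuous (prodCos k) := by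
  unfold prodCos
  fun_prop

lemma abs_prodCos_le_one {m : ℕ} (k : Fin m → ℤ) (θ : Fin m → ℝ) : |prodCos k θ| ≤ 1 := by
  rw [prodCos, Finset.abs_prod]
  exact Finset.prod_le_one (fun _ _ => abs_nonneg _) fun _ _ => abs_cos_le_one _

lemma prodCos_update {m : ℕ} (k : Fin m → ℤ) (i : Fin m) (a : ℤ) (θ : Fin m → ℝ) :
    prodCos (Function.update k i a) θ
      = cos (a * θ i) * ∏ j ∈ Finset.univ.erase i, cos (k j * θ j) := by
  rw [prodCos, ← Finset.mul_prod_erase _ _ (Finset.mem_univ i), Function.update_self]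
  congr 1
  refine Finset.prod_congr rfl fun j hj => ?_
  rw [Function.update_of_ne (Finset.ne_of_mem_erase hj)]

lemma prodCos_update_add_prodCos_update {m : ℕ} (k : Fin m → ℤ) (i : Fin m) (θ : Fin m → ℝ) :
    prodCos (Function.update k i (k i + 1)) θ + prodCos (Function.update k i (k i - 1)) θ
      = 2 * cos (θ i) * prodCos k θ := by
  rw [prodCos_update, prodCos_update, prodCos, ← Finset.mul_prod_erase _ _ (Finset.mem_univ i)]
  push_cast
  rw [add_mul, sub_mul, one_mul, cos_add, cos_sub]
  ring

lemma update_sub_right {m : ℕ} (x y : Fin m → ℤ) (i : Fin m) (a : ℤ) :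
    Function.update x i (x i + a) - y = Function.update (x - y) i ((x - y) i + a) := by
  ext j
  rcases eq_or_ne j i with rfl | hj
  · simp [add_sub_right_comm]
  · simp [hj]

lemma integrable_prodCos_mul_stepCharFun_pow {m : ℕ} (k : Fin m → ℤ) (n : ℕ) :
    Integrable (fun θ => prodCos k θ * stepCharFun m θ ^ n)
      (Measure.pi fun _ => torusMeasure) := by
  refine Integrable.of_bound (C := 1) ((continuous_prodCos k).mul
    ((continuous_stepCharFun m).pow n)).aestronglyMeasurable (ae_of_all _ fun θ => ?_)
  rw [norm_mul, norm_pow]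
  exact mul_le_one₀ (abs_prodCos_le_one k θ) (by positivity)
    (pow_le_one₀ (norm_nonneg _) (abs_stepCharFun_le_one m θ))

lemma srwKernel_eq_integral (m n : ℕ) (x y : Fin m → ℤ) :
    srwKernel m n x y = ∫ θ, prodCos (x - y) θ * stepCharFun m θ ^ n
      ∂(Measure.pi fun _ => torusMeasure) := by
  induction n generalizing x with
  | zero =>
    simp only [srwKernel, pow_zero, mul_one, prodCos]
    rw [integral_fintype_prod_eq_prod (μ := fun _ => torusMeasure)
      fun j θ => cos ((x - y) j * θ)]
    simp only [integral_cos_intCast_mul_torusMeasure, Finset.prod_ite_zero, Finset.prod_const_one,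
      Finset.mem_univ, forall_const, Pi.sub_apply, sub_eq_zero, ← funext_iff]
  | succ n ih =>
    have hinteg (k : Fin m → ℤ) := integrable_prodCos_mul_stepCharFun_pow k n
    have hcos (i : Fin m) (θ : Fin m → ℝ) :
        prodCos (Function.update x i (x i + 1) - y) θ
          + prodCos (Function.update x i (x i - 1) - y) θ = 2 * cos (θ i) * prodCos (x - y) θ := by
      rw [sub_eq_add_neg (x i), update_sub_right, update_sub_right, ← sub_eq_add_neg,
        prodCos_update_add_prodCos_update]
    simp only [srwKernel, ih, ← integral_add (hinteg _) (hinteg _)]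
    rw [← integral_finsetSum (f := fun i θ =>
        prodCos (Function.update x i (x i + 1) - y) θ * stepCharFun m θ ^ n
          + prodCos (Function.update x i (x i - 1) - y) θ * stepCharFun m θ ^ n) _
        fun i _ => (hinteg _).add (hinteg _), ← integral_div]
    refine integral_congr_ae (ae_of_all _ fun θ => ?_)
    simp only [← add_mul, hcos]
    rw [← Finset.sum_mul, ← Finset.sum_mul, ← Finset.mul_sum, pow_succ, stepCharFun]
    ring

end Fourier

section HeatKernel

open Real

/-- The transition kernel from `0` to `k` at time `t` of the continuous-time walk on `ℤ` with
jump rate `1` to each neighbour, given by its Fourier integral. -/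
noncomputable def lineKernel (t : ℝ) (k : ℤ) : ℝ :=
  ∫ θ, cos (k * θ) * exp (-(t * (2 - 2 * cos θ))) ∂torusMeasure

lemma hasSum_poisson_mul_pow (a s : ℝ) :
    HasSum (fun n : ℕ => exp (-a) * a ^ n / n.factorial * s ^ n) (exp (-(a * (1 - s)))) := by
  have h := (NormedSpace.expSeries_div_hasSum_exp (𝔸 := ℝ) (a * s)).mul_left (exp (-a))
  rw [← exp_eq_exp_ℝ, ← exp_add, show -a + a * s = -(a * (1 - s)) by ring] at h
  refine h.congr_fun fun n => ?_
  rw [mul_pow]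
  ring

lemma exp_stepCharFun (m : ℕ) (t : ℝ) (θ : Fin m → ℝ) :
    exp (-(2 * m * t * (1 - stepCharFun m θ))) = ∏ j, exp (-(t * (2 - 2 * cos (θ j)))) := by
  have hsum : m * stepCharFun m θ = ∑ j, cos (θ j) := by
    rcases Nat.eq_zero_or_pos m with rfl | hm
    · simp
    · rw [stepCharFun]
      field_simp
  rw [← exp_sum, Finset.sum_neg_distrib, ← Finset.mul_sum, Finset.sum_sub_distrib,
    ← Finset.mul_sum, ← hsum]
  simp only [Finset.sum_const, Finset.card_univ, Fintype.card_fin, nsmul_eq_mul]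
  ring_nf

lemma hasSum_heatKernel_integral (m : ℕ) (t : ℝ) (x y : Fin m → ℤ) :
    HasSum (fun n : ℕ => exp (-(2 * m) * t) * (2 * m * t) ^ n / n.factorial * srwKernel m n x y)
      (∫ θ, prodCos (x - y) θ * ∏ j, exp (-(t * (2 - 2 * cos (θ j))))
        ∂(Measure.pi fun _ => torusMeasure)) := by
  have hbound : Summable fun n : ℕ =>
      exp (-(2 * m) * t) * (|2 * m * t| ^ n / n.factorial) :=
    (summable_pow_div_factorial _).mul_left _
  simp only [srwKernel_eq_integral, ← integral_const_mul]
  refine hasSum_integral_of_dominated_convergence (fun n _ =>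
    exp (-(2 * m) * t) * (|2 * m * t| ^ n / n.factorial)) (fun n => ?_) (fun n => ?_)
    (ae_of_all _ fun _ => hbound) (integrable_const _) (ae_of_all _ fun θ => ?_)
  · exact ((integrable_prodCos_mul_stepCharFun_pow _ n).const_mul _).aestronglyMeasurable
  · refine ae_of_all _ fun θ => ?_
    rw [norm_mul, norm_div, norm_mul, norm_pow, norm_mul (prodCos _ _), norm_pow, norm_natCast,
      norm_of_nonneg (exp_pos _).le, mul_div_assoc]
    exact mul_le_of_le_one_right (by positivity) <|
      mul_le_one₀ (abs_prodCos_le_one _ θ) (by positivity)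
        (pow_le_one₀ (norm_nonneg _) (abs_stepCharFun_le_one m θ))
  · have h := (hasSum_poisson_mul_pow (2 * m * t) (stepCharFun m θ)).mul_left (prodCos (x - y) θ)
    rw [exp_stepCharFun] at h
    refine h.congr_fun fun n => ?_
    ring_nf

theorem heatKernel_eq_prod_lineKernel (m : ℕ) (t : ℝ) (x y : Fin m → ℤ) :
    heatKernel m t x y = ∏ j, lineKernel t (x j - y j) := by
  rw [heatKernel, (hasSum_heatKernel_integral m t x y).tsum_eq]
  simp only [prodCos, ← Finset.prod_mul_distrib]
  exact integral_fintype_prod_eq_prod (μ := fun _ => torusMeasure)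
    fun j θ => cos ((x - y) j * θ) * exp (-(t * (2 - 2 * cos θ)))

lemma lineKernel_neg (t : ℝ) (k : ℤ) : lineKernel t (-k) = lineKernel t k := by
  simp only [lineKernel, Int.cast_neg, neg_mul, cos_neg]

lemma abs_lineKernel_le (t : ℝ) (k : ℤ) : |lineKernel t k| ≤ lineKernel t 0 := by
  refine abs_integral_le_integral_abs.trans <| integral_mono
    (integrable_torusMeasure (by fun_prop)) (integrable_torusMeasure (by fun_prop)) fun θ => ?_
  rw [abs_mul, abs_exp, Int.cast_zero, zero_mul, cos_zero]
  gcongr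
  exact abs_cos_le_one _

lemma exp_neg_mul_two_sub_two_mul_cos_le {t θ : ℝ} (ht : 0 ≤ t) (hθ : |θ| ≤ π) :
    exp (-(t * (2 - 2 * cos θ))) ≤ exp (-(4 / π ^ 2 * t) * θ ^ 2) := by
  have hcos := cos_le_one_sub_mul_cos_sq hθ
  have h : t * (2 * (2 / π ^ 2 * θ ^ 2)) ≤ t * (2 - 2 * cos θ) := by
    gcongr
    linarith
  rw [exp_le_exp]
  linarith [show t * (2 * (2 / π ^ 2 * θ ^ 2)) = 4 / π ^ 2 * t * θ ^ 2 by ring]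

lemma integral_torusMeasure_le {f g : ℝ → ℝ} (hf : Continuous f) (hg : Integrable g)
    (hg0 : ∀ θ, 0 ≤ g θ) (hfg : ∀ θ, |θ| ≤ π → f θ ≤ g θ) :
    ∫ θ, f θ ∂torusMeasure ≤ (2 * π)⁻¹ * ∫ θ, g θ := by
  rw [integral_torusMeasure]
  gcongr
  calc ∫ θ in Ioc (-π) π, f θ ≤ ∫ θ in Ioc (-π) π, g θ :=
        setIntegral_mono_on hf.integrableOn_Ioc hg.integrableOn measurableSet_Ioc
          fun θ hθ => hfg θ (abs_le.mpr ⟨hθ.1.le, hθ.2⟩)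
    _ ≤ ∫ θ, g θ := setIntegral_le_integral hg (ae_of_all _ hg0)

lemma lineKernel_zero_le {t : ℝ} (ht : 0 < t) : lineKernel t 0 ≤ √π / 4 * (√t)⁻¹ := by
  calc lineKernel t 0 ≤ (2 * π)⁻¹ * ∫ θ, exp (-(4 / π ^ 2 * t) * θ ^ 2) :=
        integral_torusMeasure_le (by fun_prop) (integrable_exp_neg_mul_sq (by positivity))
          (fun θ => (exp_pos _).le) fun θ hθ => by
            simpa using exp_neg_mul_two_sub_two_mul_cos_le ht.le hθ
    _ = √π / 4 * (√t)⁻¹ := by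
        rw [integral_gaussian, show π / (4 / π ^ 2 * t) = (π / 2) ^ 2 * (π / t) by
          field_simp; ring, sqrt_mul (by positivity), sqrt_sq (by positivity), sqrt_div pi_nonneg]
        field_simp
        ring

lemma one_sub_cos_mul_exp_neg_mul_sq_le {b : ℝ} (hb : 0 < b) (k θ : ℝ) :
    (1 - cos (k * θ)) * exp (-b * θ ^ 2) ≤ k ^ 2 / b * exp (-(b / 2) * θ ^ 2) := by
  have hcos : 1 - cos (k * θ) ≤ (k * θ) ^ 2 / 2 := by
    linarith [one_sub_sq_div_two_le_cos (x := k * θ)]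
  have hexp : b / 2 * θ ^ 2 ≤ exp (b / 2 * θ ^ 2) := by linarith [add_one_le_exp (b / 2 * θ ^ 2)]
  calc (1 - cos (k * θ)) * exp (-b * θ ^ 2)
      ≤ (k * θ) ^ 2 / 2 * exp (-b * θ ^ 2) := by gcongr
    _ = k ^ 2 / b * (b / 2 * θ ^ 2) * exp (-b * θ ^ 2) := by field_simp
    _ ≤ k ^ 2 / b * exp (b / 2 * θ ^ 2) * exp (-b * θ ^ 2) := by gcongr
    _ = k ^ 2 / b * exp (-(b / 2) * θ ^ 2) := by
        rw [mul_assoc, ← exp_add]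
        ring_nf

lemma lineKernel_zero_sub_le {t : ℝ} (ht : 0 < t) (k : ℤ) :
    lineKernel t 0 - lineKernel t k ≤ π ^ 2 * √(2 * π) / 16 * (k ^ 2 / t) * (√t)⁻¹ := by
  set b := 4 / π ^ 2 * t with hb
  have hb0 : 0 < b := by positivity
  calc lineKernel t 0 - lineKernel t k
      = ∫ θ, (1 - cos (k * θ)) * exp (-(t * (2 - 2 * cos θ))) ∂torusMeasure := by
        rw [lineKernel, lineKernel, ← integral_sub (integrable_torusMeasure (by fun_prop))
          (integrable_torusMeasure (by fun_prop))]
        simp [sub_mul]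
    _ ≤ (2 * π)⁻¹ * ∫ θ, k ^ 2 / b * exp (-(b / 2) * θ ^ 2) :=
        integral_torusMeasure_le (by fun_prop)
          ((integrable_exp_neg_mul_sq (by positivity)).const_mul _) (fun θ => by positivity)
          fun θ hθ => (mul_le_mul_of_nonneg_left (exp_neg_mul_two_sub_two_mul_cos_le ht.le hθ)
            (by linarith [cos_le_one (k * θ)])).trans
              (one_sub_cos_mul_exp_neg_mul_sq_le hb0 k θ)
    _ = π ^ 2 * √(2 * π) / 16 * (k ^ 2 / t) * (√t)⁻¹ := by
        rw [integral_const_mul, integral_gaussian,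
          show π / (b / 2) = (π / 2) ^ 2 * (2 * π / t) by rw [hb]; field_simp; ring,
          sqrt_mul (by positivity), sqrt_sq (by positivity), sqrt_div (by positivity), hb]
        field_simp
        ring

lemma le_lineKernel_zero {t : ℝ} (ht : 1 ≤ t) : exp (-1) / π * (√t)⁻¹ ≤ lineKernel t 0 := by
  have ht0 : 0 < t := by linarith
  have hδ : 0 < (√t)⁻¹ := by positivity
  have hδπ : (√t)⁻¹ ≤ π :=
    (inv_le_one_of_one_le₀ (one_le_sqrt.mpr ht)).trans (by linarith [pi_gt_three])
  have hcont : Continuous fun θ : ℝ => exp (-(t * (2 - 2 * cos θ))) := by fun_prop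
  have hexp {θ : ℝ} (hθ : |θ| ≤ (√t)⁻¹) : exp (-1) ≤ exp (-(t * (2 - 2 * cos θ))) := by
    have hsq : θ ^ 2 ≤ t⁻¹ := by
      rw [← sq_abs, ← sq_sqrt ht0.le, ← inv_pow]
      gcongr
    have : t * (2 - 2 * cos θ) ≤ t * t⁻¹ := by
      gcongr
      linarith [one_sub_sq_div_two_le_cos (x := θ)]
    rw [exp_le_exp, neg_le_neg_iff]
    rwa [mul_inv_cancel₀ ht0.ne'] at this
  calc exp (-1) / π * (√t)⁻¹ = (2 * π)⁻¹ * ∫ _θ in Ioc (-(√t)⁻¹) (√t)⁻¹, exp (-1) := by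
        rw [setIntegral_const, smul_eq_mul, measureReal_def, volume_Ioc,
          ENNReal.toReal_ofReal (by linarith)]
        field_simp
        ring
    _ ≤ (2 * π)⁻¹ * ∫ θ in Ioc (-(√t)⁻¹) (√t)⁻¹, exp (-(t * (2 - 2 * cos θ))) := by
        gcongr ?_ * ?_
        exact setIntegral_mono_on (integrableOn_const measure_Ioc_lt_top.ne)
          hcont.integrableOn_Ioc measurableSet_Ioc fun θ hθ => hexp (abs_le.mpr ⟨hθ.1.le, hθ.2⟩)
    _ ≤ (2 * π)⁻¹ * ∫ θ in Ioc (-π) π, exp (-(t * (2 - 2 * cos θ))) := by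
        gcongr ?_ * ?_
        exact setIntegral_mono_set hcont.integrableOn_Ioc (ae_of_all _ fun θ => (exp_pos _).le)
          (Ioc_subset_Ioc (by linarith) hδπ).eventuallyLE
    _ = lineKernel t 0 := by simp [lineKernel, integral_torusMeasure]

lemma exists_le_lineKernel : ∃ δ > 0, ∃ c > 0, ∀ t ≥ 1, ∀ k : ℤ, |(k : ℝ)| ≤ δ * √t →
    c * (√t)⁻¹ ≤ lineKernel t k := by
  set A := exp (-1) / (2 * π) with hA
  set B := π ^ 2 * √(2 * π) / 16 with hB
  have hB0 : 0 < B := by positivity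
  refine ⟨√(A / B), by positivity, A, by positivity, fun t ht k hk => ?_⟩
  have ht0 : 0 < t := by linarith
  have hksq : (k : ℝ) ^ 2 / t ≤ A / B := by
    rw [div_le_iff₀ ht0, ← sq_abs, ← sq_sqrt (show 0 ≤ A / B * t by positivity),
      sqrt_mul (by positivity)]
    gcongr
  have hdiff : B * (k ^ 2 / t) * (√t)⁻¹ ≤ A * (√t)⁻¹ := by
    calc B * (k ^ 2 / t) * (√t)⁻¹ ≤ B * (A / B) * (√t)⁻¹ := by gcongr
      _ = A * (√t)⁻¹ := by rw [mul_div_cancel₀ A hB0.ne']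
  have hzero : 2 * A * (√t)⁻¹ ≤ lineKernel t 0 := by
    convert le_lineKernel_zero ht using 2
    rw [hA]
    field_simp
  have hsub := lineKernel_zero_sub_le ht0 k
  rw [← hB] at hsub
  linarith

lemma inv_sqrt_pow {t : ℝ} (ht : 0 ≤ t) (m : ℕ) : (√t)⁻¹ ^ m = t ^ (-(m / 2) : ℝ) := by
  rw [inv_pow, sqrt_eq_rpow, ← rpow_natCast, ← rpow_mul ht, ← rpow_neg ht]
  ring_nf

lemma heatKernel_comm (m : ℕ) (t : ℝ) (x y : Fin m → ℤ) :
    heatKernel m t x y = heatKernel m t y x := by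
  simp only [heatKernel_eq_prod_lineKernel, ← lineKernel_neg t (x _ - y _), neg_sub]

lemma heatKernel_self (m : ℕ) (t : ℝ) (x y : Fin m → ℤ) :
    heatKernel m t x x = heatKernel m t y y := by
  simp only [heatKernel_eq_prod_lineKernel, sub_self]

theorem exists_heatKernel_le (m : ℕ) : ∃ C > 0, ∀ t > 0, ∀ x y : Fin m → ℤ,
    heatKernel m t x y ≤ C * t ^ (-(m / 2) : ℝ) := by
  refine ⟨(√π / 4) ^ m, by positivity, fun t ht x y => ?_⟩
  calc heatKernel m t x y ≤ ∏ j, |lineKernel t (x j - y j)| := by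
        rw [heatKernel_eq_prod_lineKernel, ← Finset.abs_prod]
        exact le_abs_self _
    _ ≤ ∏ _j : Fin m, (√π / 4 * (√t)⁻¹) := Finset.prod_le_prod (fun _ _ => abs_nonneg _)
        fun j _ => (abs_lineKernel_le _ _).trans (lineKernel_zero_le ht)
    _ = (√π / 4) ^ m * t ^ (-(m / 2) : ℝ) := by
        rw [Finset.prod_const, Finset.card_univ, Fintype.card_fin, mul_pow, inv_sqrt_pow ht.le]

theorem exists_le_heatKernel (m : ℕ) : ∃ δ > 0, ∃ c > 0, ∀ t ≥ 1, ∀ x y : Fin m → ℤ,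
    (∀ j, |((x j - y j : ℤ) : ℝ)| ≤ δ * √t) → c * t ^ (-(m / 2) : ℝ) ≤ heatKernel m t x y := by
  obtain ⟨δ, hδ, c, hc, hline⟩ := exists_le_lineKernel
  refine ⟨δ, hδ, c ^ m, by positivity, fun t ht x y hxy => ?_⟩
  calc c ^ m * t ^ (-(m / 2) : ℝ) = ∏ _j : Fin m, (c * (√t)⁻¹) := by
        rw [Finset.prod_const, Finset.card_univ, Fintype.card_fin, mul_pow,
          inv_sqrt_pow (by linarith)]
    _ ≤ ∏ j, lineKernel t (x j - y j) :=
        Finset.prod_le_prod (fun _ _ => by positivity) fun j _ => hline t ht _ (hxy j)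
    _ = heatKernel m t x y := (heatKernel_eq_prod_lineKernel m t x y).symm

lemma srwKernel_nonneg (m n : ℕ) (x y : Fin m → ℤ) : 0 ≤ srwKernel m n x y := by
  induction n generalizing x with
  | zero =>
    rw [srwKernel]
    positivity
  | succ n ih =>
    rw [srwKernel]
    exact div_nonneg (Finset.sum_nonneg fun i _ => add_nonneg (ih _) (ih _)) (by positivity)

lemma heatKernel_nonneg (m : ℕ) {t : ℝ} (ht : 0 ≤ t) (x y : Fin m → ℤ) :
    0 ≤ heatKernel m t x y :=
  tsum_nonneg fun n => mul_nonneg (by positivity) (srwKernel_nonneg m n x y)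

lemma exp_neg_le_heatKernel_self (m : ℕ) {t : ℝ} (ht : 0 ≤ t) (x : Fin m → ℤ) :
    exp (-(2 * m) * t) ≤ heatKernel m t x x := by
  have h := (hasSum_heatKernel_integral m t x x).summable.le_tsum 0 fun n _ =>
    mul_nonneg (by positivity) (srwKernel_nonneg m n x x)
  simpa [srwKernel, heatKernel] using h

end HeatKernel

section Markov

variable {d : ℕ} {Ω : Type*} [MeasurableSpace Ω] {P : (Fin d → ℤ) → Measure Ω}
  {S : ℝ → Ω → (Fin d → ℤ)}

/-- The transition probability `P_x (S_u = y)`, valued in `[0, ∞]` so that sums and integrals of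
transition probabilities need no integrability side conditions. -/
noncomputable def transProb (P : (Fin d → ℤ) → Measure Ω) (S : ℝ → Ω → (Fin d → ℤ)) (u : ℝ)
    (x y : Fin d → ℤ) : ℝ≥0∞ :=
  P x {ω | S u ω = y}

namespace IsCTSRW

lemma measurable_apply (hS : IsCTSRW d P S) (u : ℝ) : Measurable (S u) :=
  hS.meas.comp measurable_prodMk_left

lemma measurableSet_eq (hS : IsCTSRW d P S) (u : ℝ) (y : Fin d → ℤ) :
    MeasurableSet {ω | S u ω = y} :=
  hS.measurable_apply u (measurableSet_singleton y)

lemma transProb_eq_ofReal (hS : IsCTSRW d P S) {u : ℝ} (hu : 0 ≤ u) (x y : Fin d → ℤ) :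
    transProb P S u x y = ENNReal.ofReal (heatKernel d u x y) := by
  have := hS.prob x
  have h := hS.fdd x 0 (fun _ => u) hu (fun i => i.elim0) fun _ => y
  simp only [forall_const, Finset.univ_eq_empty, Finset.prod_empty, mul_one] at h
  rw [← h, ENNReal.ofReal_toReal (measure_ne_top _ _), transProb]

lemma measure_forall_eq (hS : IsCTSRW d P S) (x : Fin d → ℤ) {n : ℕ} {t : Fin (n + 1) → ℝ}
    (h0 : 0 ≤ t 0) (ht : Monotone t) (y : Fin (n + 1) → (Fin d → ℤ)) :
    P x {ω | ∀ i, S (t i) ω = y i} = transProb P S (t 0) x (y 0) *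
      ∏ i : Fin n, transProb P S (t i.succ - t i.castSucc) (y i.castSucc) (y i.succ) := by
  have := hS.prob x
  have hstep (i : Fin n) : 0 ≤ t i.succ - t i.castSucc :=
    sub_nonneg.mpr (ht i.castSucc_le_succ)
  rw [← ENNReal.ofReal_toReal (measure_ne_top (P x) {ω | ∀ i, S (t i) ω = y i}),
    hS.fdd x n t h0 (fun i => ht i.castSucc_le_succ) y,
    ENNReal.ofReal_mul (heatKernel_nonneg _ h0 _ _),
    ENNReal.ofReal_prod_of_nonneg fun i _ => heatKernel_nonneg _ (hstep i) _ _,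
    hS.transProb_eq_ofReal h0]
  simp only [hS.transProb_eq_ofReal (hstep _)]

end IsCTSRW

lemma monotone_snoc {n : ℕ} {t : Fin (n + 1) → ℝ} (ht : Monotone t) {r : ℝ}
    (hr : t (Fin.last n) ≤ r) : Monotone (Fin.snoc t r : Fin (n + 2) → ℝ) := by
  refine Fin.monotone_iff_le_succ.mpr fun i => ?_
  refine Fin.lastCases ?_ (fun j => ?_) i
  · rwa [Fin.snoc_castSucc, Fin.succ_last, Fin.snoc_last]
  · rw [Fin.snoc_castSucc, ← Fin.castSucc_succ, Fin.snoc_castSucc]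
    exact ht j.castSucc_le_succ

namespace IsCTSRW

lemma measure_forall_eq_and_eq (hS : IsCTSRW d P S) (x : Fin d → ℤ) {n : ℕ}
    {t : Fin (n + 1) → ℝ} (h0 : 0 ≤ t 0) (ht : Monotone t) (y : Fin (n + 1) → (Fin d → ℤ))
    {r : ℝ} (hr : t (Fin.last n) ≤ r) (w : Fin d → ℤ) :
    P x {ω | (∀ i, S (t i) ω = y i) ∧ S r ω = w} = P x {ω | ∀ i, S (t i) ω = y i} *
      transProb P S (r - t (Fin.last n)) (y (Fin.last n)) w := by
  have h := hS.measure_forall_eq x (t := Fin.snoc t r) h0 (monotone_snoc ht hr)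
    (Fin.snoc y w : Fin (n + 2) → (Fin d → ℤ))
  rw [Fin.prod_univ_castSucc, ← Fin.castSucc_zero] at h
  simp only [Fin.forall_fin_succ' (n := n + 1), Fin.snoc_castSucc, Fin.succ_last, Fin.snoc_last,
    ← Fin.castSucc_succ] at h
  rw [h, hS.measure_forall_eq x h0 ht y, mul_assoc]

theorem markov (hS : IsCTSRW d P S) (x : Fin d → ℤ) {n : ℕ} {t : Fin (n + 1) → ℝ}
    (h0 : 0 ≤ t 0) (ht : Monotone t) {B : Set (Fin (n + 1) → (Fin d → ℤ))} {y : Fin d → ℤ}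
    (hB : ∀ a ∈ B, a (Fin.last n) = y) {r : ℝ} (hr : t (Fin.last n) ≤ r) (w : Fin d → ℤ) :
    P x {ω | (fun i => S (t i) ω) ∈ B ∧ S r ω = w} = P x {ω | (fun i => S (t i) ω) ∈ B} *
      transProb P S (r - t (Fin.last n)) y w := by
  set X : Ω → Fin (n + 1) → (Fin d → ℤ) := fun ω i => S (t i) ω
  have hX : Measurable X := measurable_pi_lambda _ fun i => hS.measurable_apply (t i)
  have hfib (a : Fin (n + 1) → (Fin d → ℤ)) : X ⁻¹' {a} = {ω | ∀ i, S (t i) ω = a i} := by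
    ext ω
    exact funext_iff
  have hsum (ν : Measure Ω) : ∑' a : B, ν (X ⁻¹' {a.1}) = ν {ω | X ω ∈ B} :=
    tsum_measure_preimage_singleton B.to_countable fun a _ => hX (measurableSet_singleton a)
  have hw := hS.measurableSet_eq r w
  calc P x {ω | X ω ∈ B ∧ S r ω = w}
      = ∑' a : B, (P x).restrict {ω | S r ω = w} (X ⁻¹' {a.1}) := by
        rw [hsum, Measure.restrict_apply' hw]
        rfl
    _ = ∑' a : B, P x (X ⁻¹' {a.1}) * transProb P S (r - t (Fin.last n)) y w := by
        refine tsum_congr fun a => ?_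
        rw [Measure.restrict_apply' hw, hfib, ← hB a.1 a.2]
        exact hS.measure_forall_eq_and_eq x h0 ht a.1 hr w
    _ = P x {ω | X ω ∈ B} * transProb P S (r - t (Fin.last n)) y w := by
        rw [ENNReal.tsum_mul_right, hsum]

theorem markov_two_step (hS : IsCTSRW d P S) (x : Fin d → ℤ) {n : ℕ} {t : Fin (n + 1) → ℝ}
    (h0 : 0 ≤ t 0) (ht : Monotone t) {B : Set (Fin (n + 1) → (Fin d → ℤ))} {y : Fin d → ℤ}
    (hB : ∀ a ∈ B, a (Fin.last n) = y) {r r' : ℝ} (hr : t (Fin.last n) ≤ r) (hr' : r ≤ r')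
    (v w : Fin d → ℤ) :
    P x {ω | (fun i => S (t i) ω) ∈ B ∧ S r ω = v ∧ S r' ω = w} =
      P x {ω | (fun i => S (t i) ω) ∈ B} *
        (transProb P S (r - t (Fin.last n)) y v * transProb P S (r' - r) v w) := by
  have h := hS.markov x (t := Fin.snoc t r) h0 (monotone_snoc ht hr)
    (B := {a | (fun i : Fin (n + 1) => a i.castSucc) ∈ B ∧ a (Fin.last _) = v})
    (fun a ha => ha.2) (r := r') (by rwa [Fin.snoc_last]) w
  simp only [mem_ofPred_eq, Fin.snoc_castSucc, Fin.snoc_last, and_assoc] at h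
  rw [h, hS.markov x h0 ht hB hr v, mul_assoc]

lemma measure_eq_and_eq (hS : IsCTSRW d P S) (x : Fin d → ℤ) {r r' : ℝ} (h0 : 0 ≤ r)
    (h : r ≤ r') (v w : Fin d → ℤ) :
    P x {ω | S r ω = v ∧ S r' ω = w} = transProb P S r x v * transProb P S (r' - r) v w := by
  simpa [transProb] using
    hS.measure_forall_eq_and_eq x (t := fun _ : Fin 1 => r) h0 monotone_const (fun _ => v) h w

lemma measurable_transProb (hS : IsCTSRW d P S) (x y : Fin d → ℤ) :
    Measurable fun u => transProb P S u x y := by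
  have := hS.prob x
  exact measurable_measure_prodMk_left (hS.meas (measurableSet_singleton y))

lemma tsum_transProb (hS : IsCTSRW d P S) (u : ℝ) (x : Fin d → ℤ) :
    ∑' y, transProb P S u x y = 1 := by
  have := hS.prob x
  have h := tsum_measure_preimage_singleton (μ := P x) countable_univ (f := S u)
    fun a _ => hS.measurableSet_eq u a
  rwa [preimage_univ, measure_univ, tsum_univ fun y => P x (S u ⁻¹' {y})] at h

lemma transProb_mul_transProb_le (hS : IsCTSRW d P S) {s u : ℝ} (hs : 0 ≤ s) (hu : 0 ≤ u)
    (x w y : Fin d → ℤ) :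
    transProb P S s x w * transProb P S u w y ≤ transProb P S (s + u) x y := by
  have h := hS.measure_eq_and_eq x hs (le_add_of_nonneg_right hu) w y
  rw [add_sub_cancel_left] at h
  rw [← h]
  exact measure_mono fun ω hω => hω.2

lemma transProb_comm (hS : IsCTSRW d P S) {u : ℝ} (hu : 0 ≤ u) (x y : Fin d → ℤ) :
    transProb P S u x y = transProb P S u y x := by
  rw [hS.transProb_eq_ofReal hu, hS.transProb_eq_ofReal hu, heatKernel_comm]

lemma transProb_self (hS : IsCTSRW d P S) {u : ℝ} (hu : 0 ≤ u) (x y : Fin d → ℤ) :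
    transProb P S u x x = transProb P S u y y := by
  rw [hS.transProb_eq_ofReal hu, hS.transProb_eq_ofReal hu, heatKernel_self]

lemma ofReal_exp_neg_le_transProb_self (hS : IsCTSRW d P S) {u : ℝ} (hu : u ∈ Icc 0 1)
    (y : Fin d → ℤ) : ENNReal.ofReal (Real.exp (-(2 * d))) ≤ transProb P S u y y := by
  rw [hS.transProb_eq_ofReal hu.1]
  refine ENNReal.ofReal_le_ofReal (le_trans ?_ (exp_neg_le_heatKernel_self d hu.1 y))
  rw [Real.exp_le_exp, neg_mul, neg_le_neg_iff]
  exact mul_le_of_le_one_right (by positivity) hu.2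

end IsCTSRW

end Markov

section Hitting

/-- The event that the sequence `X` visits `y` for the first time at index `i`. -/
def firstVisit {Ω E : Type*} (X : ℕ → Ω → E) (y : E) (i : ℕ) : Set Ω :=
  {ω | (∀ j < i, X j ω ≠ y) ∧ X i ω = y}

lemma pairwise_disjoint_firstVisit {Ω E : Type*} (X : ℕ → Ω → E) (y : E) :
    Pairwise (Function.onFun Disjoint (firstVisit X y)) := by
  intro i j hij
  refine Set.disjoint_left.mpr fun ω hi hj => ?_
  rcases lt_or_gt_of_ne hij with h | h
  · exact hj.1 i h hi.2
  · exact hi.1 j h hj.2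

lemma exists_le_mem_firstVisit {Ω E : Type*} {X : ℕ → Ω → E} {y : E} {i : ℕ} {ω : Ω}
    (h : X i ω = y) : ∃ k ≤ i, ω ∈ firstVisit X y k := by
  classical
  have hex : ∃ i, X i ω = y := ⟨i, h⟩
  exact ⟨Nat.find hex, Nat.find_min' hex h, fun j hj => Nat.find_min hex hj, Nat.find_spec hex⟩

lemma mem_firstVisit_iff {Ω E : Type*} {X : ℕ → Ω → E} {y : E} {i : ℕ} {ω : Ω} :
    ω ∈ firstVisit X y i ↔ (fun j : Fin (i + 1) => X j ω) ∈
      {a : Fin (i + 1) → E | (∀ j : Fin i, a j.castSucc ≠ y) ∧ a (Fin.last i) = y} := by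
  simp [firstVisit, Fin.forall_iff]

variable {d : ℕ} {Ω : Type*} [MeasurableSpace Ω] {P : (Fin d → ℤ) → Measure Ω}
  {S : ℝ → Ω → (Fin d → ℤ)}

namespace IsCTSRW

lemma measurableSet_firstVisit (hS : IsCTSRW d P S) (τ : ℕ → ℝ) (y : Fin d → ℤ) (i : ℕ) :
    MeasurableSet (firstVisit (fun j => S (τ j)) y i) := by
  simp only [firstVisit, ofPred_and, ofPred_forall]
  exact (MeasurableSet.iInter fun j => MeasurableSet.iInter fun _ =>
    (hS.measurableSet_eq (τ j) y).compl).inter (hS.measurableSet_eq (τ i) y)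

lemma measure_firstVisit_and_eq (hS : IsCTSRW d P S) (x y w : Fin d → ℤ) {τ : ℕ → ℝ}
    (h0 : 0 ≤ τ 0) (hτ : Monotone τ) {i : ℕ} {r : ℝ} (hr : τ i ≤ r) :
    P x {ω | ω ∈ firstVisit (fun j => S (τ j)) y i ∧ S r ω = w} =
      P x (firstVisit (fun j => S (τ j)) y i) * transProb P S (r - τ i) y w := by
  conv_rhs => rw [← ofPred_mem_eq (s := firstVisit _ _ _)]
  simp only [mem_firstVisit_iff]
  exact hS.markov x (t := fun j : Fin (i + 1) => τ j) h0 (hτ.comp Fin.val_strictMono.monotone)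
    (fun a ha => ha.2) hr w

lemma measure_firstVisit_and_eq_and_eq (hS : IsCTSRW d P S) (x y v w : Fin d → ℤ) {τ : ℕ → ℝ}
    (h0 : 0 ≤ τ 0) (hτ : Monotone τ) {i : ℕ} {r r' : ℝ} (hr : τ i ≤ r) (hr' : r ≤ r') :
    P x {ω | ω ∈ firstVisit (fun j => S (τ j)) y i ∧ S r ω = v ∧ S r' ω = w} =
      P x (firstVisit (fun j => S (τ j)) y i) *
        (transProb P S (r - τ i) y v * transProb P S (r' - r) v w) := by
  conv_rhs => rw [← ofPred_mem_eq (s := firstVisit _ _ _)]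
  simp only [mem_firstVisit_iff]
  exact hS.markov_two_step x (t := fun j : Fin (i + 1) => τ j) h0
    (hτ.comp Fin.val_strictMono.monotone) (fun a ha => ha.2) hr hr' v w

/-- Once at `y`, the walk stays at `y` for a unit of time with probability at least `exp (-2d)`;
the factor appears twice because the extra time unit is split at `u`. -/
lemma measure_firstVisit_mul_le (hS : IsCTSRW d P S) (x y w : Fin d → ℤ) {τ : ℕ → ℝ}
    (h0 : 0 ≤ τ 0) (hτ : Monotone τ) {i : ℕ} {t u : ℝ} (ht : τ i ≤ t)
    (hu : u ∈ Icc (τ i) (τ i + 1)) (hut : u ≤ t + 1) :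
    ENNReal.ofReal (Real.exp (-(2 * d))) ^ 2 *
        (P x (firstVisit (fun j => S (τ j)) y i) * transProb P S (t - τ i) y w)
      ≤ P x {ω | ω ∈ firstVisit (fun j => S (τ j)) y i ∧ S u ω = y ∧ S (t + 1) ω = w} := by
  set c := ENNReal.ofReal (Real.exp (-(2 * d)))
  have hstay : c ≤ transProb P S (u - τ i) y y :=
    hS.ofReal_exp_neg_le_transProb_self ⟨by linarith [hu.1], by linarith [hu.2]⟩ y
  have hcont : c * transProb P S (t - τ i) y w ≤ transProb P S (t + 1 - u) y w := by
    calc c * transProb P S (t - τ i) y w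
        ≤ transProb P S (τ i + 1 - u) y y * transProb P S (t - τ i) y w := by
          gcongr
          exact hS.ofReal_exp_neg_le_transProb_self ⟨by linarith [hu.2], by linarith [hu.1]⟩ y
      _ ≤ transProb P S (τ i + 1 - u + (t - τ i)) y w :=
          hS.transProb_mul_transProb_le (by linarith [hu.2]) (by linarith) y y w
      _ = transProb P S (t + 1 - u) y w := by ring_nf
  rw [hS.measure_firstVisit_and_eq_and_eq x y y w h0 hτ hu.1 hut]
  calc c ^ 2 * (P x (firstVisit (fun j => S (τ j)) y i) * transProb P S (t - τ i) y w)
      = P x (firstVisit (fun j => S (τ j)) y i) * (c * (c * transProb P S (t - τ i) y w)) := by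
        ring
    _ ≤ _ := by gcongr

lemma sum_indicator_measure_firstVisit_le (hS : IsCTSRW d P S) (x y w : Fin d → ℤ) {τ : ℕ → ℝ}
    (h0 : 0 ≤ τ 0) (hτ : Monotone τ) {N : ℕ} {t u : ℝ} (hN : τ N ≤ t) (hu : u ∈ Ioc 0 (t + 1)) :
    ∑ i ∈ Finset.range (N + 1), (Ioc (τ i) (τ i + 1)).indicator (fun _ =>
        ENNReal.ofReal (Real.exp (-(2 * d))) ^ 2 *
          (P x (firstVisit (fun j => S (τ j)) y i) * transProb P S (t - τ i) y w)) u
      ≤ transProb P S u x y * transProb P S (t + 1 - u) y w := by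
  set F : ℕ → Set Ω := firstVisit (fun j => S (τ j)) y
  have hmeas (i : ℕ) : MeasurableSet {ω | ω ∈ F i ∧ S u ω = y ∧ S (t + 1) ω = w} :=
    (hS.measurableSet_firstVisit τ y i).inter
      ((hS.measurableSet_eq u y).inter (hS.measurableSet_eq (t + 1) w))
  have hdisj : Pairwise (Function.onFun Disjoint
      fun i => {ω | ω ∈ F i ∧ S u ω = y ∧ S (t + 1) ω = w}) := fun i j hij =>
    (pairwise_disjoint_firstVisit _ y hij).mono (fun ω hω => hω.1) fun ω hω => hω.1
  rw [← hS.measure_eq_and_eq x hu.1.le hu.2 y w]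
  calc _ ≤ ∑ i ∈ Finset.range (N + 1), P x {ω | ω ∈ F i ∧ S u ω = y ∧ S (t + 1) ω = w} := by
        refine Finset.sum_le_sum fun i hi => indicator_apply_le' (fun hui => ?_) fun _ => zero_le
        exact hS.measure_firstVisit_mul_le x y w h0 hτ
          ((hτ (Finset.mem_range_succ_iff.mp hi)).trans hN) (Ioc_subset_Icc_self hui) hu.2
    _ = P x (⋃ i ∈ Finset.range (N + 1), {ω | ω ∈ F i ∧ S u ω = y ∧ S (t + 1) ω = w}) :=
        (measure_biUnion_finset (hdisj.set_pairwise _) fun i _ => hmeas i).symm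
    _ ≤ P x {ω | S u ω = y ∧ S (t + 1) ω = w} :=
        measure_mono (iUnion₂_subset fun i _ ω hω => hω.2)

lemma sum_measure_firstVisit_le (hS : IsCTSRW d P S) (x y w : Fin d → ℤ) {τ : ℕ → ℝ}
    (h0 : 0 ≤ τ 0) (hτ : Monotone τ) {N : ℕ} {t : ℝ} (hN : τ N ≤ t) :
    ENNReal.ofReal (Real.exp (-(2 * d))) ^ 2 * ∑ i ∈ Finset.range (N + 1),
        P x (firstVisit (fun j => S (τ j)) y i) * transProb P S (t - τ i) y w
      ≤ ∫⁻ u in Ioc 0 (t + 1), transProb P S u x y * transProb P S (t + 1 - u) y w := by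
  have hτ0 (i : ℕ) : 0 ≤ τ i := h0.trans (hτ i.zero_le)
  have hτt {i : ℕ} (hi : i ∈ Finset.range (N + 1)) : τ i ≤ t :=
    (hτ (Finset.mem_range_succ_iff.mp hi)).trans hN
  rw [Finset.mul_sum]
  refine le_trans (le_of_eq ?_) (setLIntegral_mono' measurableSet_Ioc fun u hu =>
    hS.sum_indicator_measure_firstVisit_le x y w h0 hτ hN hu)
  rw [lintegral_finsetSum _ fun i _ => measurable_const.indicator measurableSet_Ioc]
  refine Finset.sum_congr rfl fun i hi => ?_
  rw [setLIntegral_indicator measurableSet_Ioc, setLIntegral_const,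
    inter_eq_left.mpr (Ioc_subset_Ioc (hτ0 i) (by linarith [hτt hi])), Real.volume_Ioc,
    add_sub_cancel_left, ENNReal.ofReal_one, mul_one]

lemma measure_exists_le_and_eq_le (hS : IsCTSRW d P S) (x y w : Fin d → ℤ) {τ : ℕ → ℝ}
    (h0 : 0 ≤ τ 0) (hτ : Monotone τ) {N : ℕ} {t : ℝ} (hN : τ N ≤ t) :
    P x {ω | (∃ i ≤ N, S (τ i) ω = y) ∧ S t ω = w} ≤ ENNReal.ofReal (Real.exp (4 * d)) *
      ∫⁻ u in Ioc 0 (t + 1), transProb P S u x y * transProb P S (t + 1 - u) y w := by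
  set F : ℕ → Set Ω := firstVisit (fun j => S (τ j)) y
  have hsub : {ω | (∃ i ≤ N, S (τ i) ω = y) ∧ S t ω = w}
      ⊆ ⋃ i ∈ Finset.range (N + 1), {ω | ω ∈ F i ∧ S t ω = w} := by
    rintro ω ⟨⟨i, hi, hy⟩, hw⟩
    obtain ⟨k, hk, hF⟩ := exists_le_mem_firstVisit (X := fun j => S (τ j)) hy
    exact mem_iUnion₂.mpr ⟨k, Finset.mem_range_succ_iff.mpr (hk.trans hi), hF, hw⟩
  have hexp : ENNReal.ofReal (Real.exp (4 * d)) * ENNReal.ofReal (Real.exp (-(2 * d))) ^ 2 = 1 := by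
    rw [← ENNReal.ofReal_pow (by positivity), ← ENNReal.ofReal_mul (by positivity),
      ← Real.exp_nat_mul, ← Real.exp_add, ← ENNReal.ofReal_one, ← Real.exp_zero]
    push_cast
    ring_nf
  calc P x {ω | (∃ i ≤ N, S (τ i) ω = y) ∧ S t ω = w}
      ≤ ∑ i ∈ Finset.range (N + 1), P x {ω | ω ∈ F i ∧ S t ω = w} :=
        (measure_mono hsub).trans (measure_biUnion_finset_le _ _)
    _ = ∑ i ∈ Finset.range (N + 1), P x (F i) * transProb P S (t - τ i) y w :=
        Finset.sum_congr rfl fun i hi => hS.measure_firstVisit_and_eq x y w h0 hτ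
          ((hτ (Finset.mem_range_succ_iff.mp hi)).trans hN)
    _ = ENNReal.ofReal (Real.exp (4 * d)) * (ENNReal.ofReal (Real.exp (-(2 * d))) ^ 2 *
          ∑ i ∈ Finset.range (N + 1), P x (F i) * transProb P S (t - τ i) y w) := by
        rw [← mul_assoc, hexp, one_mul]
    _ ≤ _ := by
        gcongr
        exact hS.sum_measure_firstVisit_le x y w h0 hτ hN

end IsCTSRW

lemma exists_dyadic_mem_Ico {t u ε : ℝ} (hu : 0 ≤ u) (hut : u < t) (hε : 0 < ε) :
    ∃ n i : ℕ, i ≤ 2 ^ n ∧ i * (t / 2 ^ n) ∈ Ico u (u + ε) := by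
  have ht : 0 < t := hu.trans_lt hut
  have hm : 0 < min ε (t - u) := lt_min hε (sub_pos.mpr hut)
  obtain ⟨n, hn⟩ := exists_nat_gt (t / min ε (t - u))
  have hq : 0 < t / 2 ^ n := by positivity
  have hmesh : t / 2 ^ n < min ε (t - u) := by
    rw [div_lt_iff₀ (by positivity), mul_comm, ← div_lt_iff₀ hm]
    exact hn.trans (mod_cast Nat.lt_two_pow_self)
  have hle : u ≤ ⌈u / (t / 2 ^ n)⌉₊ * (t / 2 ^ n) := (div_le_iff₀ hq).mp (Nat.le_ceil _)
  have hlt : ⌈u / (t / 2 ^ n)⌉₊ * (t / 2 ^ n) < u + t / 2 ^ n := by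
    calc ⌈u / (t / 2 ^ n)⌉₊ * (t / 2 ^ n) < (u / (t / 2 ^ n) + 1) * (t / 2 ^ n) := by
          gcongr
          exact Nat.ceil_lt_add_one (by positivity)
      _ = u + t / 2 ^ n := by rw [add_mul, div_mul_cancel₀ _ hq.ne', one_mul]
  refine ⟨n, ⌈u / (t / 2 ^ n)⌉₊, ?_, hle, by linarith [min_le_left ε (t - u)]⟩
  refine Nat.ceil_le.mpr ((div_le_iff₀ hq).mpr ?_)
  push_cast
  rw [mul_div_cancel₀ _ (by positivity)]
  exact hut.le

namespace IsCTSRW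

theorem measure_visit_and_eq_le (hS : IsCTSRW d P S) (x y w : Fin d → ℤ) {t : ℝ} (ht : 0 ≤ t) :
    P x {ω | (∃ u ∈ Icc 0 t, S u ω = y) ∧ S t ω = w} ≤ ENNReal.ofReal (Real.exp (4 * d)) *
      ∫⁻ u in Ioc 0 (t + 1), transProb P S u x y * transProb P S (t + 1 - u) y w := by
  let D (n : ℕ) : Set Ω :=
    {ω | (∃ i ≤ 2 ^ n, S ((i : ℕ) * (t / 2 ^ n)) ω = y) ∧ S t ω = w}
  have hmono : Monotone D := by
    refine monotone_nat_of_le_succ fun n ω ⟨⟨i, hi, hy⟩, hw⟩ => ⟨⟨2 * i, by lia, ?_⟩, hw⟩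
    rw [← hy]
    congr 1
    push_cast
    field_simp
    ring
  have hsub : {ω | (∃ u ∈ Icc 0 t, S u ω = y) ∧ S t ω = w} ≤ᵐ[P x] ⋃ n, D n := by
    filter_upwards [hS.rightCont x] with ω hω
    rintro ⟨⟨u, hu, hy⟩, hw⟩
    refine mem_iUnion.mpr ?_
    rcases hu.2.eq_or_lt with rfl | hut
    · exact ⟨0, ⟨1, by simp, by simpa using hy⟩, hw⟩
    · obtain ⟨ε, hε, hr⟩ := hω u hu.1
      obtain ⟨n, i, hi, hmem⟩ := exists_dyadic_mem_Ico hu.1 hut hε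
      exact ⟨n, ⟨i, hi, (hr _ hmem.1 hmem.2).trans hy⟩, hw⟩
  calc P x {ω | (∃ u ∈ Icc 0 t, S u ω = y) ∧ S t ω = w} ≤ P x (⋃ n, D n) := measure_mono_ae hsub
    _ = ⨆ n, P x (D n) := hmono.measure_iUnion
    _ ≤ _ := iSup_le fun n => hS.measure_exists_le_and_eq_le x y w
        (τ := fun i : ℕ => i * (t / 2 ^ n)) (by simp)
        (Nat.mono_cast.mul_const (by positivity))
        (by simp [mul_div_cancel₀])

end IsCTSRW

/-- The Green function `∫₀ᵀ P_x (S_u = y) du` truncated at time `T`. -/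
noncomputable def green (P : (Fin d → ℤ) → Measure Ω) (S : ℝ → Ω → (Fin d → ℤ)) (T : ℝ)
    (x y : Fin d → ℤ) : ℝ≥0∞ :=
  ∫⁻ u in Ioc 0 T, transProb P S u x y

lemma green_mono {T T' : ℝ} (h : T ≤ T') (x y : Fin d → ℤ) : green P S T x y ≤ green P S T' x y :=
  lintegral_mono_set (Ioc_subset_Ioc_right h)

lemma lintegral_Ioc_comp_sub_left (f : ℝ → ℝ≥0∞) (T : ℝ) :
    ∫⁻ u in Ioc 0 T, f (T - u) = ∫⁻ u in Ioc 0 T, f u := by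
  have hind (u : ℝ) :
      (Icc 0 T).indicator (fun u => f (T - u)) u = (Icc 0 T).indicator f (T - u) := by
    simp only [indicator, mem_Icc, sub_nonneg, sub_le_self_iff, and_comm]
  rw [restrict_Ioc_eq_restrict_Icc, ← lintegral_indicator measurableSet_Icc,
    ← lintegral_indicator measurableSet_Icc, lintegral_congr hind, lintegral_sub_left_eq_self]

namespace IsCTSRW

lemma tsum_green (hS : IsCTSRW d P S) (T : ℝ) (x : Fin d → ℤ) :
    ∑' y, green P S T x y = ENNReal.ofReal T := by
  unfold green
  rw [← lintegral_tsum fun y => (hS.measurable_transProb x y).aemeasurable]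
  simp only [hS.tsum_transProb, setLIntegral_const, Real.volume_Ioc, sub_zero, one_mul]

lemma measure_visit_le (hS : IsCTSRW d P S) (x y : Fin d → ℤ) {t : ℝ} (ht : 0 ≤ t) :
    P x {ω | ∃ u ∈ Icc 0 t, S u ω = y} ≤
      ENNReal.ofReal (Real.exp (4 * d)) * green P S (t + 1) x y := by
  have hsub : {ω | ∃ u ∈ Icc 0 t, S u ω = y}
      ⊆ ⋃ w, {ω | (∃ u ∈ Icc 0 t, S u ω = y) ∧ S t ω = w} :=
    fun ω h => mem_iUnion.mpr ⟨S t ω, h, rfl⟩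
  have hmeas (w : Fin d → ℤ) : AEMeasurable (fun u => transProb P S u x y *
      transProb P S (t + 1 - u) y w) (volume.restrict (Ioc 0 (t + 1))) :=
    ((hS.measurable_transProb x y).mul
      ((hS.measurable_transProb y w).comp (by fun_prop))).aemeasurable
  calc P x {ω | ∃ u ∈ Icc 0 t, S u ω = y}
      ≤ ∑' w, P x {ω | (∃ u ∈ Icc 0 t, S u ω = y) ∧ S t ω = w} :=
        (measure_mono hsub).trans (measure_iUnion_le _)
    _ ≤ ∑' w, ENNReal.ofReal (Real.exp (4 * d)) *
          ∫⁻ u in Ioc 0 (t + 1), transProb P S u x y * transProb P S (t + 1 - u) y w :=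
        ENNReal.tsum_le_tsum fun w => hS.measure_visit_and_eq_le x y w ht
    _ = ENNReal.ofReal (Real.exp (4 * d)) * green P S (t + 1) x y := by
        rw [ENNReal.tsum_mul_left, ← lintegral_tsum hmeas]
        simp only [ENNReal.tsum_mul_left, hS.tsum_transProb, mul_one, green]

lemma ae_finite_range (hS : IsCTSRW d P S) (x : Fin d → ℤ) :
    ∀ᵐ ω ∂P x, ∀ t : ℝ, {y | ∃ u ∈ Icc 0 t, S u ω = y}.Finite := by
  have hnat (n : ℕ) : ∀ᵐ ω ∂P x, {y | ∃ u ∈ Icc (0 : ℝ) n, S u ω = y}.Finite := by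
    refine ae_finite_setOfPred_mem (s := fun y => {ω | ∃ u ∈ Icc (0 : ℝ) n, S u ω = y}) ?_
    refine ne_top_of_le_ne_top ?_
      (ENNReal.tsum_le_tsum fun y => hS.measure_visit_le x y n.cast_nonneg)
    rw [ENNReal.tsum_mul_left, hS.tsum_green]
    exact ENNReal.mul_ne_top ENNReal.ofReal_ne_top ENNReal.ofReal_ne_top
  filter_upwards [ae_all_iff.mpr hnat] with ω hω t
  obtain ⟨n, hn⟩ := exists_nat_ge t
  exact (hω n).subset fun y ⟨u, hu, hy⟩ => ⟨u, ⟨hu.1, hu.2.trans hn⟩, hy⟩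

lemma exists_transProb_le (hS : IsCTSRW d P S) : ∃ C > 0, ∀ u > 0, ∀ x y : Fin d → ℤ,
    transProb P S u x y ≤ ENNReal.ofReal (C * u ^ (-(d / 2) : ℝ)) := by
  obtain ⟨C, hC, hheat⟩ := exists_heatKernel_le d
  refine ⟨C, hC, fun u hu x y => ?_⟩
  rw [hS.transProb_eq_ofReal hu.le]
  exact ENNReal.ofReal_le_ofReal (hheat u hu x y)

lemma lintegral_transProb_mul_transProb_le (hS : IsCTSRW d P S) {T : ℝ} {A : ℝ≥0∞}
    (hA : ∀ u ≥ T / 2, ∀ x y, transProb P S u x y ≤ A) (x y : Fin d → ℤ) :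
    ∫⁻ u in Ioc 0 T, transProb P S u x y * transProb P S (T - u) y x
      ≤ 2 * A * green P S T x y := by
  have hmeas := hS.measurable_transProb x y
  calc ∫⁻ u in Ioc 0 T, transProb P S u x y * transProb P S (T - u) y x
      ≤ ∫⁻ u in Ioc 0 T, A * (transProb P S u x y + transProb P S (T - u) x y) := by
        refine setLIntegral_mono' measurableSet_Ioc fun u hu => ?_
        rw [hS.transProb_comm (sub_nonneg.mpr hu.2) y x, mul_add]
        rcases le_total (T / 2) u with h | h
        · exact (mul_le_mul_left (hA u h x y) _).trans le_add_self
        · rw [mul_comm (transProb P S u x y)]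
          exact (mul_le_mul_left (hA (T - u) (by linarith) x y) _).trans le_self_add
    _ = A * (green P S T x y + ∫⁻ u in Ioc 0 T, transProb P S (T - u) x y) := by
        rw [lintegral_const_mul A (f := fun u => transProb P S u x y + transProb P S (T - u) x y)
          (hmeas.add (hmeas.comp (by fun_prop))), lintegral_add_left hmeas, green]
    _ = 2 * A * green P S T x y := by
        rw [lintegral_Ioc_comp_sub_left fun u => transProb P S u x y, ← green]
        ring

theorem exists_measure_visit_set_and_eq_le (hS : IsCTSRW d P S) :
    ∃ C > 0, ∀ t > 0, ∀ (x : Fin d → ℤ) (H : Set (Fin d → ℤ)),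
      P x {ω | (∃ u ∈ Icc 0 t, S u ω ∈ H) ∧ S t ω = x} ≤
        ENNReal.ofReal (C * t ^ (-(d / 2) : ℝ)) * ∑' y, H.indicator (green P S (t + 1) x) y := by
  obtain ⟨C, hC, hle⟩ := hS.exists_transProb_le
  refine ⟨Real.exp (4 * d) * (2 * (C * (1 / 2) ^ (-(d / 2) : ℝ))), by positivity,
    fun t ht x H => ?_⟩
  set A := ENNReal.ofReal (C * ((1 / 2) ^ (-(d / 2) : ℝ) * t ^ (-(d / 2) : ℝ))) with hA
  have hlate : ∀ u ≥ (t + 1) / 2, ∀ x y, transProb P S u x y ≤ A := fun u hu x y => by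
    refine (hle u (by linarith) x y).trans (ENNReal.ofReal_le_ofReal ?_)
    rw [← Real.mul_rpow (by norm_num) ht.le]
    gcongr ?_ * ?_
    exact Real.rpow_le_rpow_of_nonpos (by positivity) (by linarith) 
      (neg_nonpos.mpr (by positivity))
  have hsub : {ω | (∃ u ∈ Icc 0 t, S u ω ∈ H) ∧ S t ω = x}
      ⊆ ⋃ y : H, {ω | (∃ u ∈ Icc 0 t, S u ω = y) ∧ S t ω = x} :=
    fun ω ⟨⟨u, hu, h⟩, h0⟩ => mem_iUnion.mpr ⟨⟨S u ω, h⟩, ⟨u, hu, rfl⟩, h0⟩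
  calc P x {ω | (∃ u ∈ Icc 0 t, S u ω ∈ H) ∧ S t ω = x}
      ≤ ∑' y : H, P x {ω | (∃ u ∈ Icc 0 t, S u ω = y) ∧ S t ω = x} :=
        (measure_mono hsub).trans (measure_iUnion_le _)
    _ ≤ ∑' y : H, ENNReal.ofReal (Real.exp (4 * d)) * (2 * A) * green P S (t + 1) x y := by
        refine ENNReal.tsum_le_tsum fun y => (hS.measure_visit_and_eq_le x y x ht.le).trans ?_
        rw [mul_assoc]
        gcongr
        exact hS.lintegral_transProb_mul_transProb_le hlate x y
    _ = _ := by
        rw [ENNReal.tsum_mul_left, tsum_subtype H (green P S (t + 1) x), hA,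
          show (2 : ℝ≥0∞) = ENNReal.ofReal 2 by simp, ← ENNReal.ofReal_mul zero_le_two,
          ← ENNReal.ofReal_mul (by positivity)]
        congr 2
        ring

end IsCTSRW

end Hitting

section LocalTime

lemma piFinSuccAbove_symm_last_apply {n : ℕ} {E : Type*} [MeasurableSpace E]
    (p : E × (Fin (n + 1) → E)) :
    (MeasurableEquiv.piFinSuccAbove (fun _ : Fin (n + 2) => E) (Fin.last (n + 1))).symm p
      = Fin.snoc p.2 p.1 := by
  simp [MeasurableEquiv.piFinSuccAbove_symm_apply, Fin.insertNthEquiv]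

theorem lintegral_pi_mul_prod_le {E : Type*} [MeasurableSpace E] (m : Measure E) [SigmaFinite m]
    {a : E → ℝ≥0∞} {k : E → E → ℝ≥0∞} (ha : Measurable a) (hk : Measurable (Function.uncurry k))
    {B : ℝ≥0∞} (hB : ∀ s, ∫⁻ r, k s r ∂m ≤ B) (n : ℕ) :
    ∫⁻ v : Fin (n + 1) → E, a (v 0) * ∏ i : Fin n, k (v i.castSucc) (v i.succ)
      ∂(Measure.pi fun _ => m) ≤ (∫⁻ u, a u ∂m) * B ^ n := by
  have hmeas (N : ℕ) : Measurable fun v : Fin (N + 1) → E =>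
      a (v 0) * ∏ i : Fin N, k (v i.castSucc) (v i.succ) :=
    (ha.comp (measurable_pi_apply _)).mul (Finset.measurable_fun_prod _ fun i _ =>
      hk.comp (f := fun v : Fin (N + 1) → E => (v i.castSucc, v i.succ)) (by fun_prop))
  induction n with
  | zero =>
    simp only [Finset.univ_eq_empty, Finset.prod_empty, mul_one, pow_zero]
    exact ((measurePreserving_funUnique m (Fin 1)).lintegral_comp ha).le
  | succ n ih =>
    have hmp := (measurePreserving_piFinSuccAbove (fun _ : Fin (n + 2) => m)
      (Fin.last (n + 1))).symm
    have hsnoc (p : E × (Fin (n + 1) → E)) :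
        a ((Fin.snoc p.2 p.1 : Fin (n + 2) → E) 0) * ∏ i : Fin (n + 1),
          k ((Fin.snoc p.2 p.1 : Fin (n + 2) → E) i.castSucc)
            ((Fin.snoc p.2 p.1 : Fin (n + 2) → E) i.succ)
        = k (p.2 (Fin.last n)) p.1 *
          (a (p.2 0) * ∏ i : Fin n, k (p.2 i.castSucc) (p.2 i.succ)) := by
      rw [Fin.prod_univ_castSucc, ← Fin.castSucc_zero]
      simp only [Fin.snoc_castSucc, Fin.succ_last, Fin.snoc_last, ← Fin.castSucc_succ]
      ring
    have hprod : Measurable fun p : E × (Fin (n + 1) → E) => k (p.2 (Fin.last n)) p.1 *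
        (a (p.2 0) * ∏ i : Fin n, k (p.2 i.castSucc) (p.2 i.succ)) :=
      (hk.comp (f := fun p : E × (Fin (n + 1) → E) => (p.2 (Fin.last n), p.1))
        (by fun_prop)).mul ((hmeas n).comp measurable_snd)
    rw [← hmp.lintegral_comp (hmeas (n + 1))]
    simp only [piFinSuccAbove_symm_last_apply, hsnoc]
    rw [lintegral_prod_symm _ hprod.aemeasurable]
    calc _ ≤ ∫⁻ v : Fin (n + 1) → E,
          B * (a (v 0) * ∏ i : Fin n, k (v i.castSucc) (v i.succ)) ∂(Measure.pi fun _ => m) := by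
          exact lintegral_mono fun v => (lintegral_mul_const (f := k (v (Fin.last n))) _
            hk.of_uncurry_left).trans_le (mul_le_mul_left (hB _) _)
      _ ≤ B * ((∫⁻ u, a u ∂m) * B ^ n) := by
          rw [lintegral_const_mul _ (hmeas n)]
          gcongr
      _ = (∫⁻ u, a u ∂m) * B ^ (n + 1) := by ring

lemma lintegral_pi_comp_perm {n : ℕ} {E : Type*} [MeasurableSpace E] (m : Measure E)
    [SigmaFinite m] {H : (Fin n → E) → ℝ≥0∞} (hH : Measurable H) (σ : Equiv.Perm (Fin n)) :
    ∫⁻ v, H (v ∘ σ) ∂(Measure.pi fun _ => m) = ∫⁻ v, H v ∂(Measure.pi fun _ => m) := by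
  rw [← (measurePreserving_piCongrLeft (fun _ : Fin n => m) σ.symm).lintegral_comp hH]
  refine lintegral_congr fun v => congrArg H (funext fun i => ?_)
  simpa using (MeasurableEquiv.piCongrLeft_apply_apply (β := fun _ => E) σ.symm v (σ i)).symm

theorem lintegral_pi_le_factorial_mul {n : ℕ} (m : Measure ℝ) [SigmaFinite m]
    {F H : (Fin n → ℝ) → ℝ≥0∞} {s : Set ℝ} (hH : Measurable H)
    (hF : ∀ (σ : Equiv.Perm (Fin n)) v, F (v ∘ σ) = F v) (hs : ∀ᵐ u ∂m, u ∈ s)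
    (hle : ∀ v, Monotone v → (∀ i, v i ∈ s) → F v ≤ H v) :
    ∫⁻ v, F v ∂(Measure.pi fun _ => m) ≤ n.factorial * ∫⁻ v, H v ∂(Measure.pi fun _ => m) := by
  have hcube : ∀ᵐ v ∂(Measure.pi fun _ : Fin n => m), ∀ i, v i ∈ s :=
    ae_all_iff.mpr fun i => (Measure.tendsto_eval_ae_ae (i := i)).eventually hs
  calc ∫⁻ v, F v ∂(Measure.pi fun _ => m)
      ≤ ∫⁻ v, ∑ σ : Equiv.Perm (Fin n), H (v ∘ σ) ∂(Measure.pi fun _ => m) := by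
        refine lintegral_mono_ae (hcube.mono fun v hv => ?_)
        calc F v = F (v ∘ Tuple.sort v) := (hF _ v).symm
          _ ≤ H (v ∘ Tuple.sort v) := hle _ (Tuple.monotone_sort v) fun i => hv _
          _ ≤ _ := Finset.single_le_sum (f := fun σ : Equiv.Perm (Fin n) => H (v ∘ σ))
            (fun _ _ => zero_le) (Finset.mem_univ _)
    _ = n.factorial * ∫⁻ v, H v ∂(Measure.pi fun _ => m) := by
        rw [lintegral_finsetSum (f := fun (σ : Equiv.Perm (Fin n)) v => H (v ∘ σ)) _
          fun σ _ => hH.comp (measurable_pi_lambda _ fun i => measurable_pi_apply _)]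
        simp only [lintegral_pi_comp_perm m hH, Finset.sum_const, Finset.card_univ,
          Fintype.card_perm, Fintype.card_fin, nsmul_eq_mul]

variable {d : ℕ} {Ω : Type*} [MeasurableSpace Ω] {P : (Fin d → ℤ) → Measure Ω}
  {S : ℝ → Ω → (Fin d → ℤ)}

/-- The local time `ℓ_t(y)`: the time spent at `y` by the path `S · ω` up to time `t`. -/
noncomputable def localTime {E Ω : Type*} (S : ℝ → Ω → E) (t : ℝ) (y : E) (ω : Ω) : ℝ≥0∞ :=
  volume.restrict (Ioc 0 t) {u | S u ω = y}

/-- The Green function `G(0, 0)`, that is, the expected total time which the walk started at the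
origin spends there. -/
noncomputable def greenZero (P : (Fin d → ℤ) → Measure Ω) (S : ℝ → Ω → (Fin d → ℤ)) : ℝ≥0∞ :=
  ∫⁻ u in Ici 0, transProb P S u 0 0

namespace IsCTSRW

theorem greenZero_lt_top (hS : IsCTSRW d P S) (hd : 3 ≤ d) : greenZero P S < ∞ := by
  have := hS.prob 0
  obtain ⟨C, -, hC⟩ := hS.exists_transProb_le
  rw [greenZero, ← Icc_union_Ioi_eq_Ici zero_le_one]
  refine (lintegral_union_le _ _ _).trans_lt (ENNReal.add_lt_top.mpr ⟨?_, ?_⟩)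
  · calc ∫⁻ u in Icc (0 : ℝ) 1, transProb P S u 0 0 ≤ ∫⁻ _u in Icc (0 : ℝ) 1, 1 :=
          lintegral_mono fun u => prob_le_one
      _ < ∞ := by simp
  · have hinteg : IntegrableOn (fun u : ℝ => C * u ^ (-(d / 2) : ℝ)) (Ioi 1) := by
      refine (integrableOn_Ioi_rpow_of_lt ?_ one_pos).const_mul C
      have : (3 : ℝ) ≤ d := mod_cast hd
      linarith
    calc ∫⁻ u in Ioi (1 : ℝ), transProb P S u 0 0
        ≤ ∫⁻ u in Ioi (1 : ℝ), ENNReal.ofReal (C * u ^ (-(d / 2) : ℝ)) :=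
          setLIntegral_mono' measurableSet_Ioi fun u hu => hC u (one_pos.trans hu) 0 0
      _ ≤ ∫⁻ u in Ioi (1 : ℝ), ‖C * u ^ (-(d / 2) : ℝ)‖ₑ :=
          lintegral_mono fun u => Real.ofReal_le_enorm _
      _ < ∞ := hinteg.hasFiniteIntegral

lemma measurable_localTime (hS : IsCTSRW d P S) (t : ℝ) (y : Fin d → ℤ) :
    Measurable (localTime S t y) :=
  measurable_measure_prodMk_left
    ((hS.meas.comp measurable_swap) (measurableSet_singleton y))

lemma lintegral_localTime_pow (hS : IsCTSRW d P S) (x y : Fin d → ℤ) (t : ℝ) (n : ℕ) :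
    ∫⁻ ω, localTime S t y ω ^ n ∂(P x) = ∫⁻ v : Fin n → ℝ, P x {ω | ∀ i, S (v i) ω = y}
      ∂(Measure.pi fun _ => volume.restrict (Ioc 0 t)) := by
  have := hS.prob x
  set m := volume.restrict (Ioc 0 t)
  have hset : MeasurableSet {p : Ω × (Fin n → ℝ) | ∀ i, S (p.2 i) p.1 = y} := by
    rw [ofPred_forall]
    refine MeasurableSet.iInter fun i => ?_
    have hpair : Measurable fun p : Ω × (Fin n → ℝ) => (p.2 i, p.1) := by fun_prop
    exact (hS.meas.comp hpair) (measurableSet_singleton y)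
  have hpow (ω : Ω) :
      localTime S t y ω ^ n = Measure.pi (fun _ : Fin n => m) {v | ∀ i, S (v i) ω = y} := by
    have hpi : {v : Fin n → ℝ | ∀ i, S (v i) ω = y} = univ.pi fun _ => {u | S u ω = y} := by
      ext
      simp
    simp [hpi, Measure.pi_pi, localTime, m]
  simp only [hpow]
  exact (Measure.prod_apply (μ := P x) hset).symm.trans (Measure.prod_apply_symm hset)

/-- Kac's moment formula, as an upper bound. -/
theorem lintegral_localTime_pow_succ_le (hS : IsCTSRW d P S) (x y : Fin d → ℤ) (t : ℝ) (n : ℕ) :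
    ∫⁻ ω, localTime S t y ω ^ (n + 1) ∂(P x)
      ≤ (n + 1).factorial * (green P S t x y * greenZero P S ^ n) := by
  set m := volume.restrict (Ioc 0 t)
  let k (s r : ℝ) : ℝ≥0∞ := (Ici 0).indicator (fun u => transProb P S u 0 0) (r - s)
  let H (v : Fin (n + 1) → ℝ) : ℝ≥0∞ :=
    transProb P S (v 0) x y * ∏ i : Fin n, k (v i.castSucc) (v i.succ)
  have hk : Measurable (Function.uncurry k) :=
    ((hS.measurable_transProb 0 0).indicator measurableSet_Ici).comp
      (measurable_snd.sub measurable_fst)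
  have hH : Measurable H :=
    ((hS.measurable_transProb x y).comp (measurable_pi_apply _)).mul
      (Finset.measurable_fun_prod _ fun i _ =>
        hk.comp (f := fun v : Fin (n + 1) → ℝ => (v i.castSucc, v i.succ)) (by fun_prop))
  have hkint (s : ℝ) : ∫⁻ r, k s r ∂m ≤ greenZero P S := by
    calc ∫⁻ r, k s r ∂m ≤ ∫⁻ r, k s r := lintegral_mono' Measure.restrict_le_self le_rfl
      _ = ∫⁻ r, (Ici 0).indicator (fun u => transProb P S u 0 0) r :=
          lintegral_sub_right_eq_self ((Ici 0).indicator fun u => transProb P S u 0 0) s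
      _ = greenZero P S := lintegral_indicator measurableSet_Ici _
  have hsymm (σ : Equiv.Perm (Fin (n + 1))) (v : Fin (n + 1) → ℝ) :
      P x {ω | ∀ i, S ((v ∘ σ) i) ω = y} = P x {ω | ∀ i, S (v i) ω = y} :=
    congrArg (P x) <| ext fun ω => (σ.surjective.forall (p := fun i => S (v i) ω = y)).symm
  have hsorted (v : Fin (n + 1) → ℝ) (hv : Monotone v) (hpos : ∀ i, v i ∈ Ioc 0 t) :
      P x {ω | ∀ i, S (v i) ω = y} ≤ H v := by
    rw [hS.measure_forall_eq x (hpos 0).1.le hv fun _ => y]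
    refine (congrArg _ (Finset.prod_congr rfl fun i _ => ?_)).le
    have hstep : 0 ≤ v i.succ - v i.castSucc := sub_nonneg.mpr (hv i.castSucc_le_succ)
    rw [hS.transProb_self hstep y 0]
    exact (indicator_of_mem (mem_Ici.mpr hstep) fun u => transProb P S u 0 0).symm
  rw [hS.lintegral_localTime_pow]
  refine (lintegral_pi_le_factorial_mul m hH hsymm (ae_restrict_mem measurableSet_Ioc)
    hsorted).trans ?_
  gcongr
  exact lintegral_pi_mul_prod_le m (hS.measurable_transProb x y) hk hkint n

theorem measure_exists_lt_localTime_le (hS : IsCTSRW d P S) (x : Fin d → ℤ) (t : ℝ) {L : ℝ}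
    (hL : 0 < L) (n : ℕ) :
    P x {ω | ∃ y, ENNReal.ofReal L < localTime S t y ω} ≤
      (n + 1).factorial * greenZero P S ^ n *
        (ENNReal.ofReal t / ENNReal.ofReal L ^ (n + 1)) := by
  have hmarkov (y : Fin d → ℤ) : P x {ω | ENNReal.ofReal L < localTime S t y ω} ≤
      (n + 1).factorial * (green P S t x y * greenZero P S ^ n)
        / ENNReal.ofReal L ^ (n + 1) := by
    calc P x {ω | ENNReal.ofReal L < localTime S t y ω}
        ≤ P x {ω | ENNReal.ofReal L ^ (n + 1) ≤ localTime S t y ω ^ (n + 1)} :=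
          measure_mono <| ofPred_subset_ofPred.mpr fun ω hω => pow_le_pow_left' hω.le _
      _ ≤ (∫⁻ ω, localTime S t y ω ^ (n + 1) ∂(P x)) / ENNReal.ofReal L ^ (n + 1) :=
          meas_ge_le_lintegral_div ((hS.measurable_localTime t y).pow_const _).aemeasurable
            (pow_ne_zero _ (by simpa using hL)) (ENNReal.pow_ne_top ENNReal.ofReal_ne_top)
      _ ≤ _ := by
          gcongr
          exact hS.lintegral_localTime_pow_succ_le x y t n
  rw [ofPred_exists]
  refine (measure_iUnion_le _).trans ((ENNReal.tsum_le_tsum hmarkov).trans_eq ?_)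
  simp only [div_eq_mul_inv]
  rw [ENNReal.tsum_mul_right, ENNReal.tsum_mul_left, ENNReal.tsum_mul_right, hS.tsum_green]
  ring

end IsCTSRW

end LocalTime

section Chernoff

variable {ι Ω : Type*} [MeasurableSpace Ω] {μ : Measure Ω} [IsProbabilityMeasure μ]

lemma exp_mul_le_one_add_mul {x : ℝ} (hx : x ∈ Icc (0 : ℝ) 1) (t : ℝ) :
    Real.exp (t * x) ≤ 1 + (Real.exp t - 1) * x := by
  have h := convexOn_exp.2 (mem_univ 0) (mem_univ t) (sub_nonneg.mpr hx.2) hx.1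
    (sub_add_cancel 1 x)
  simp only [smul_eq_mul, mul_zero, zero_add, Real.exp_zero, mul_one] at h
  rw [mul_comm t x]
  linarith

lemma mgf_le_exp_of_mem_Icc {X : Ω → ℝ} (hX : AEMeasurable X μ)
    (h01 : ∀ᵐ ω ∂μ, X ω ∈ Icc (0 : ℝ) 1) (t : ℝ) :
    mgf X μ t ≤ Real.exp ((Real.exp t - 1) * μ[X]) := by
  have hinteg : Integrable X μ := .of_mem_Icc 0 1 hX h01
  calc mgf X μ t ≤ ∫ ω, (1 + (Real.exp t - 1) * X ω) ∂μ :=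
        integral_mono_ae (integrable_exp_mul_of_mem_Icc hX h01)
          ((integrable_const _).add (hinteg.const_mul _))
          (h01.mono fun ω hω => exp_mul_le_one_add_mul hω t)
    _ = (Real.exp t - 1) * μ[X] + 1 := by
        rw [integral_add (integrable_const _) (hinteg.const_mul _), integral_const_mul]
        simp [add_comm]
    _ ≤ _ := Real.add_one_le_exp _

variable {X : ι → Ω → ℝ}

lemma mgf_sum_le_exp_of_mem_Icc (hind : iIndepFun X μ) (hX : ∀ i, Measurable (X i))
    (h01 : ∀ i ω, X i ω ∈ Icc (0 : ℝ) 1) (F : Finset ι) (t : ℝ) :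
    mgf (∑ i ∈ F, X i) μ t ≤ Real.exp ((Real.exp t - 1) * ∑ i ∈ F, μ[X i]) := by
  rw [hind.mgf_sum hX, Finset.mul_sum, Real.exp_sum]
  exact Finset.prod_le_prod (fun _ _ => mgf_nonneg) fun i _ =>
    mgf_le_exp_of_mem_Icc (hX i).aemeasurable (ae_of_all _ (h01 i)) t

lemma integrable_exp_mul_sum_of_mem_Icc (hX : ∀ i, Measurable (X i))
    (h01 : ∀ i ω, X i ω ∈ Icc (0 : ℝ) 1) (F : Finset ι) (t : ℝ) :
    Integrable (fun ω => Real.exp (t * (∑ i ∈ F, X i) ω)) μ := by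
  refine integrable_exp_mul_of_mem_Icc (a := 0) (b := F.card)
    (F.aemeasurable_sum fun i _ => (hX i).aemeasurable) (ae_of_all _ fun ω => ?_)
  rw [Finset.sum_apply]
  refine ⟨Finset.sum_nonneg fun i _ => (h01 i ω).1, ?_⟩
  simpa using Finset.sum_le_card_nsmul F (fun i => X i ω) 1 fun i _ => (h01 i ω).2

theorem measure_le_sum_le_exp (hind : iIndepFun X μ) (hX : ∀ i, Measurable (X i))
    (h01 : ∀ i ω, X i ω ∈ Icc (0 : ℝ) 1) (F : Finset ι) (l : ℝ) :
    μ.real {ω | l ≤ ∑ i ∈ F, X i ω} ≤ Real.exp (-l + 2 * ∑ i ∈ F, μ[X i]) := by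
  have hmean : 0 ≤ ∑ i ∈ F, μ[X i] :=
    Finset.sum_nonneg fun i _ => integral_nonneg fun ω => (h01 i ω).1
  have he : Real.exp 1 - 1 ≤ 2 := by linarith [Real.exp_one_lt_three]
  calc μ.real {ω | l ≤ ∑ i ∈ F, X i ω} = μ.real {ω | l ≤ (∑ i ∈ F, X i) ω} := by
        simp only [Finset.sum_apply]
    _ ≤ Real.exp (-1 * l) * mgf (∑ i ∈ F, X i) μ 1 :=
        measure_ge_le_exp_mul_mgf l zero_le_one (integrable_exp_mul_sum_of_mem_Icc hX h01 F 1)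
    _ ≤ Real.exp (-1 * l) * Real.exp ((Real.exp 1 - 1) * ∑ i ∈ F, μ[X i]) := by
        gcongr
        exact mgf_sum_le_exp_of_mem_Icc hind hX h01 F 1
    _ ≤ Real.exp (-l + 2 * ∑ i ∈ F, μ[X i]) := by
        rw [← Real.exp_add, neg_one_mul]
        gcongr

theorem measure_sum_le_le_exp (hind : iIndepFun X μ) (hX : ∀ i, Measurable (X i))
    (h01 : ∀ i ω, X i ω ∈ Icc (0 : ℝ) 1) (F : Finset ι) :
    μ.real {ω | ∑ i ∈ F, X i ω ≤ (∑ i ∈ F, μ[X i]) / 4} ≤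
      Real.exp (-((∑ i ∈ F, μ[X i]) / 4)) := by
  set m := ∑ i ∈ F, μ[X i]
  have hmean : 0 ≤ m := Finset.sum_nonneg fun i _ => integral_nonneg fun ω => (h01 i ω).1
  have he : Real.exp (-1) ≤ 1 / 2 := by
    rw [Real.exp_neg, one_div]
    gcongr
    linarith [Real.add_one_le_exp 1]
  calc μ.real {ω | ∑ i ∈ F, X i ω ≤ m / 4} = μ.real {ω | (∑ i ∈ F, X i) ω ≤ m / 4} := by
        simp only [Finset.sum_apply]
    _ ≤ Real.exp (-(-1) * (m / 4)) * mgf (∑ i ∈ F, X i) μ (-1) :=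
        measure_le_le_exp_mul_mgf _ (neg_nonpos.mpr zero_le_one)
          (integrable_exp_mul_sum_of_mem_Icc hX h01 F (-1))
    _ ≤ Real.exp (-(-1) * (m / 4)) * Real.exp ((Real.exp (-1) - 1) * m) := by
        gcongr
        exact mgf_sum_le_exp_of_mem_Icc hind hX h01 F (-1)
    _ ≤ Real.exp (-(m / 4)) := by
        rw [← Real.exp_add]
        gcongr
        nlinarith

end Chernoff

section Annealed

variable {d : ℕ} {α : ℝ} {Ω Ωz : Type*} [MeasurableSpace Ω] [MeasurableSpace Ωz]
  {P : (Fin d → ℤ) → Measure Ω} {S : ℝ → Ω → (Fin d → ℤ)}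
  {μ : Measure Ωz} {z : (Fin d → ℤ) → Ωz → ℝ} {f : ℝ → ℝ}

/-- The additive functional `∫₀ᵗ f(z(S_u)) du` of the scenery seen along the walk, for `f ≥ 0`
(negative values of `f` count as zero). -/
noncomputable def sceneryIntegral {E Ω Ωz : Type*} (f : ℝ → ℝ) (z : E → Ωz → ℝ) (S : ℝ → Ω → E)
    (t : ℝ) (ζ : Ωz) (ω : Ω) : ℝ≥0∞ :=
  ∫⁻ u in Ioc 0 t, ENNReal.ofReal (f (z (S u ω) ζ))

namespace IsCTSRW

lemma measurable_path (hS : IsCTSRW d P S) (ω : Ω) : Measurable fun u => S u ω :=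
  hS.meas.comp measurable_prodMk_right

lemma lintegral_comp_path (hS : IsCTSRW d P S) (t : ℝ) (ω : Ω) (g : (Fin d → ℤ) → ℝ≥0∞) :
    ∫⁻ u in Ioc 0 t, g (S u ω) = ∑' y, g y * localTime S t y ω := by
  have hpath := hS.measurable_path ω
  rw [← lintegral_map (measurable_of_countable g) hpath, lintegral_countable']
  exact tsum_congr fun y => congrArg _ (Measure.map_apply hpath (measurableSet_singleton y))

lemma tsum_localTime (hS : IsCTSRW d P S) (t : ℝ) (ω : Ω) :
    ∑' y, localTime S t y ω = ENNReal.ofReal t := by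
  simpa using (hS.lintegral_comp_path t ω 1).symm

lemma localTime_eq_zero (hS : IsCTSRW d P S) {t : ℝ} {ω : Ω} {y : Fin d → ℤ}
    (hy : ¬∃ u ∈ Icc 0 t, S u ω = y) : localTime S t y ω = 0 := by
  have hmeas : MeasurableSet {u | S u ω = y} := hS.measurable_path ω (measurableSet_singleton y)
  rw [localTime, Measure.restrict_apply hmeas, ← measure_empty (μ := (volume : Measure ℝ))]
  exact congrArg _ (eq_empty_of_forall_notMem fun u hu => hy ⟨u, Ioc_subset_Icc_self hu.2, hu.1⟩)

lemma measurable_sceneryIntegral (hS : IsCTSRW d P S) (hz : ∀ y, Measurable (z y))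
    (hf : Measurable f) (t : ℝ) :
    Measurable fun p : Ωz × Ω => sceneryIntegral f z S t p.1 p.2 := by
  have hpair : Measurable fun q : (Ωz × Ω) × ℝ => (S q.2 q.1.2, q.1.1) :=
    (hS.meas.comp (f := fun q : (Ωz × Ω) × ℝ => (q.2, q.1.2)) (by fun_prop)).prodMk (by fun_prop)
  have heval : Measurable fun q : (Fin d → ℤ) × Ωz => z q.1 q.2 :=
    measurable_from_prod_countable_right hz
  exact (hf.comp (heval.comp hpair)).ennreal_ofReal.lintegral_prod_right'

lemma localTime_ne_top (hS : IsCTSRW d P S) (t : ℝ) (y : Fin d → ℤ) (ω : Ω) :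
    localTime S t y ω ≠ ∞ :=
  ne_top_of_le_ne_top (hS.tsum_localTime t ω ▸ ENNReal.ofReal_ne_top) (ENNReal.le_tsum y)

lemma lintegral_comp_path_eq_sum (hS : IsCTSRW d P S) {t : ℝ} {ω : Ω} {F : Finset (Fin d → ℤ)}
    (hF : ∀ u ∈ Icc 0 t, S u ω ∈ F) (g : (Fin d → ℤ) → ℝ≥0∞) :
    ∫⁻ u in Ioc 0 t, g (S u ω) = ∑ y ∈ F, g y * localTime S t y ω := by
  rw [hS.lintegral_comp_path, tsum_eq_sum]
  intro y hy
  rw [hS.localTime_eq_zero fun ⟨u, hu, h⟩ => hy (h ▸ hF u hu), mul_zero]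

lemma sum_toReal_localTime (hS : IsCTSRW d P S) {t : ℝ} (ht : 0 ≤ t) {ω : Ω}
    {F : Finset (Fin d → ℤ)} (hF : ∀ u ∈ Icc 0 t, S u ω ∈ F) :
    ∑ y ∈ F, (localTime S t y ω).toReal = t := by
  have hsum := hS.lintegral_comp_path_eq_sum hF 1
  simp only [Pi.one_apply, one_mul, setLIntegral_one, Real.volume_Ioc, sub_zero] at hsum
  rw [← ENNReal.toReal_sum fun y _ => hS.localTime_ne_top t y ω, ← hsum, ENNReal.toReal_ofReal ht]

lemma sceneryIntegral_eq_ofReal_sum {Ωz : Type*} {z : (Fin d → ℤ) → Ωz → ℝ}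
    (hS : IsCTSRW d P S) (hf : ∀ r, 0 ≤ f r) {t : ℝ} {ω : Ω} {F : Finset (Fin d → ℤ)}
    (hF : ∀ u ∈ Icc 0 t, S u ω ∈ F) (ζ : Ωz) :
    sceneryIntegral f z S t ζ ω =
      ENNReal.ofReal (∑ y ∈ F, (localTime S t y ω).toReal * f (z y ζ)) := by
  rw [sceneryIntegral, hS.lintegral_comp_path_eq_sum hF fun y => ENNReal.ofReal (f (z y ζ)),
    ENNReal.ofReal_sum_of_nonneg fun y _ => mul_nonneg ENNReal.toReal_nonneg (hf _)]
  refine Finset.sum_congr rfl fun y _ => ?_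
  rw [ENNReal.ofReal_mul ENNReal.toReal_nonneg, ENNReal.ofReal_toReal (hS.localTime_ne_top t y ω),
    mul_comm]

/-- Conditionally on the walk, the functional is a weighted sum of independent variables, whose
weights are the local times. -/
theorem measure_le_sceneryIntegral_le (hS : IsCTSRW d P S) (hz : IsScenery d α μ z)
    (hf : Measurable f) (hf01 : ∀ r, f r ∈ Icc (0 : ℝ) 1) {t L : ℝ} (ht : 0 ≤ t) (hL : 0 < L)
    {ω : Ω} (hfin : {y | ∃ u ∈ Icc 0 t, S u ω = y}.Finite)
    (hloc : ∀ y, localTime S t y ω ≤ ENNReal.ofReal L) (l : ℝ) :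
    μ.real {ζ | ENNReal.ofReal (L * l) ≤ sceneryIntegral f z S t ζ ω} ≤
      Real.exp (-l + 2 * (t / L * ∫ ζ, f (z 0 ζ) ∂μ)) := by
  have := hz.prob
  let F := hfin.toFinset
  have hF (u : ℝ) (hu : u ∈ Icc 0 t) : S u ω ∈ F := hfin.mem_toFinset.mpr ⟨u, hu, rfl⟩
  let a (y : Fin d → ℤ) : ℝ := (localTime S t y ω).toReal / L
  have ha (y : Fin d → ℤ) : a y ∈ Icc (0 : ℝ) 1 :=
    ⟨by positivity, (div_le_one hL).mpr (ENNReal.toReal_le_of_le_ofReal hL.le (hloc y))⟩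
  let X (y : Fin d → ℤ) (ζ : Ωz) : ℝ := a y * f (z y ζ)
  have hX (y : Fin d → ℤ) : Measurable (X y) := (hf.comp (hz.meas y)).const_mul _
  have hind : iIndepFun X μ := hz.indep.comp (fun y r => a y * f r) fun y => hf.const_mul _
  have h01 (y : Fin d → ℤ) (ζ : Ωz) : X y ζ ∈ Icc (0 : ℝ) 1 :=
    ⟨mul_nonneg (ha y).1 (hf01 _).1, mul_le_one₀ (ha y).2 (hf01 _).1 (hf01 _).2⟩
  have hmean : ∑ y ∈ F, μ[X y] = t / L * ∫ ζ, f (z 0 ζ) ∂μ := by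
    have hident (y : Fin d → ℤ) : μ[X y] = a y * ∫ ζ, f (z 0 ζ) ∂μ :=
      (integral_const_mul _ _).trans (congrArg _ ((hz.ident y).comp hf).integral_eq)
    rw [Finset.sum_congr rfl fun y _ => hident y, ← Finset.sum_mul, ← Finset.sum_div,
      hS.sum_toReal_localTime ht hF]
  have hsum (ζ : Ωz) : ∑ y ∈ F, (localTime S t y ω).toReal * f (z y ζ) = L * ∑ y ∈ F, X y ζ := by
    rw [Finset.mul_sum]
    refine Finset.sum_congr rfl fun y _ => ?_
    simp only [X, a]
    field_simp
  rw [← hmean]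
  refine le_trans (measureReal_mono fun ζ hζ => ?_) (measure_le_sum_le_exp hind hX h01 F l)
  rw [mem_ofPred_eq, hS.sceneryIntegral_eq_ofReal_sum (fun r => (hf01 r).1) hF, hsum,
    ENNReal.ofReal_le_ofReal_iff (mul_nonneg hL.le (Finset.sum_nonneg fun y _ => (h01 y ζ).1))]
    at hζ
  exact le_of_mul_le_mul_left hζ hL

lemma lintegral_measure_le_sceneryIntegral_le (hS : IsCTSRW d P S) (hz : IsScenery d α μ z)
    (hf : Measurable f) (hf01 : ∀ r, f r ∈ Icc (0 : ℝ) 1) {t L : ℝ} (ht : 0 ≤ t) (hL : 0 < L)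
    (l : ℝ) (x : Fin d → ℤ) :
    ∫⁻ ζ, P x {ω | ENNReal.ofReal (L * l) ≤ sceneryIntegral f z S t ζ ω} ∂μ ≤
      P x {ω | ∃ y, ENNReal.ofReal L < localTime S t y ω} +
        ENNReal.ofReal (Real.exp (-l + 2 * (t / L * ∫ ζ, f (z 0 ζ) ∂μ))) := by
  have := hz.prob
  have := hS.prob x
  set B := {ω | ∃ y, ENNReal.ofReal L < localTime S t y ω} with hB
  set δ := ENNReal.ofReal (Real.exp (-l + 2 * (t / L * ∫ ζ, f (z 0 ζ) ∂μ)))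
  have hBmeas : MeasurableSet B := by
    rw [hB, ofPred_exists]
    exact .iUnion fun y => measurableSet_lt measurable_const (hS.measurable_localTime t y)
  have hset : MeasurableSet
      {p : Ωz × Ω | ENNReal.ofReal (L * l) ≤ sceneryIntegral f z S t p.1 p.2} :=
    measurableSet_le measurable_const (hS.measurable_sceneryIntegral hz.meas hf t)
  have hpath : ∀ᵐ ω ∂(P x), μ {ζ | ENNReal.ofReal (L * l) ≤ sceneryIntegral f z S t ζ ω}
      ≤ B.indicator 1 ω + δ := by
    filter_upwards [hS.ae_finite_range x] with ω hω
    by_cases hb : ω ∈ B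
    · rw [indicator_of_mem hb]
      exact prob_le_one.trans le_self_add
    · refine le_add_left ?_
      rw [← ofReal_measureReal]
      exact ENNReal.ofReal_le_ofReal (hS.measure_le_sceneryIntegral_le hz hf hf01 ht hL (hω t)
        (fun y => not_lt.mp fun hy => hb ⟨y, hy⟩) l)
  calc ∫⁻ ζ, P x {ω | ENNReal.ofReal (L * l) ≤ sceneryIntegral f z S t ζ ω} ∂μ
      = ∫⁻ ω, μ {ζ | ENNReal.ofReal (L * l) ≤ sceneryIntegral f z S t ζ ω} ∂(P x) :=
        (Measure.prod_apply (μ := μ) (ν := P x) hset).symm.trans (Measure.prod_apply_symm hset)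
    _ ≤ ∫⁻ ω, (B.indicator 1 ω + δ) ∂(P x) := lintegral_mono_ae hpath
    _ = P x B + δ := by
        rw [lintegral_add_right _ measurable_const, lintegral_indicator_one hBmeas,
          lintegral_const, measure_univ, mul_one]

theorem exists_measure_lt_localTime_le (hS : IsCTSRW d P S) (hd : 3 ≤ d) {η : ℝ} (hη : 0 < η)
    (b : ℝ) : ∃ C > (0 : ℝ), ∀ t ≥ (1 : ℝ), ∀ x,
      P x {ω | ∃ y, ENNReal.ofReal (t ^ η) < localTime S t y ω} ≤
        ENNReal.ofReal (C * t ^ (-b)) := by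
  obtain ⟨n, hn⟩ := exists_nat_ge ((b + 1) / η)
  lift greenZero P S to NNReal using (hS.greenZero_lt_top hd).ne with G hG
  refine ⟨(n + 1).factorial * (G : ℝ) ^ n + 1, by positivity, fun t ht x => ?_⟩
  have ht0 : 0 < t := one_pos.trans_le ht
  have hpow : t / (t ^ η) ^ (n + 1) ≤ t ^ (-b) := by
    have hexp : 1 - η * (n + 1 : ℕ) ≤ -b := by
      rw [div_le_iff₀ hη] at hn
      push_cast
      linarith
    calc t / (t ^ η) ^ (n + 1) = t ^ (1 - η * (n + 1 : ℕ)) := by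
          rw [← Real.rpow_mul_natCast ht0.le, Real.rpow_sub ht0, Real.rpow_one]
      _ ≤ t ^ (-b) := Real.rpow_le_rpow_of_exponent_le ht hexp
  refine (hS.measure_exists_lt_localTime_le x t (Real.rpow_pos_of_pos ht0 η) n).trans ?_
  rw [← hG, ← ENNReal.ofReal_pow (by positivity), ← ENNReal.ofReal_div_of_pos (by positivity),
    ← ENNReal.ofReal_coe_nnreal, ← ENNReal.ofReal_pow G.coe_nonneg, ← ENNReal.ofReal_natCast,
    ← ENNReal.ofReal_mul (by positivity), ← ENNReal.ofReal_mul (by positivity)]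
  refine ENNReal.ofReal_le_ofReal ?_
  gcongr
  linarith

end IsCTSRW

lemma exists_exp_neg_rpow_le {η : ℝ} (hη : 0 < η) (b : ℝ) :
    ∃ C > (0 : ℝ), ∀ t ≥ (1 : ℝ), Real.exp (-t ^ η) ≤ C * t ^ (-b) := by
  obtain ⟨n, hn⟩ := exists_nat_ge (b / η)
  refine ⟨n.factorial, by positivity, fun t ht => ?_⟩
  have ht0 : 0 < t := one_pos.trans_le ht
  calc Real.exp (-t ^ η) = (Real.exp (t ^ η))⁻¹ := Real.exp_neg _
    _ ≤ ((t ^ η) ^ n / n.factorial)⁻¹ := by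
        gcongr
        exact Real.pow_div_factorial_le_exp _ (by positivity) n
    _ = n.factorial * t ^ (-(η * n)) := by
        rw [inv_div, ← Real.rpow_mul_natCast ht0.le, Real.rpow_neg ht0.le, div_eq_mul_inv]
    _ ≤ n.factorial * t ^ (-b) := by
        gcongr
        rwa [div_le_iff₀' hη] at hn

theorem IsCTSRW.exists_lintegral_measure_le_sceneryIntegral_le (hS : IsCTSRW d P S)
    (hz : IsScenery d α μ z) (hd : 3 ≤ d) {η : ℝ} (hη : 0 < η) (K b : ℝ) :
    ∃ C : ℝ, ∀ t ≥ (1 : ℝ), ∀ f : ℝ → ℝ, Measurable f → (∀ r, f r ∈ Icc (0 : ℝ) 1) →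
      t * ∫ ζ, f (z 0 ζ) ∂μ ≤ K →
      ∫⁻ ζ, P 0 {ω | ENNReal.ofReal (t ^ (2 * η)) ≤ sceneryIntegral f z S t ζ ω} ∂μ ≤
        ENNReal.ofReal (C * t ^ (-b)) := by
  obtain ⟨C₁, hC₁, hloc⟩ := hS.exists_measure_lt_localTime_le hd hη b
  obtain ⟨C₂, hC₂, hexp⟩ := exists_exp_neg_rpow_le hη b
  refine ⟨C₁ + Real.exp (2 * K) * C₂, fun t ht f hf hf01 hK => ?_⟩
  have ht0 : 0 < t := one_pos.trans_le ht
  have hL : 1 ≤ t ^ η := Real.one_le_rpow ht hη.le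
  have hmean : t / t ^ η * ∫ ζ, f (z 0 ζ) ∂μ ≤ K := by
    refine le_trans ?_ hK
    gcongr
    · exact integral_nonneg fun ζ => (hf01 _).1
    · exact div_le_self ht0.le hL
  have hChernoff : Real.exp (-t ^ η + 2 * (t / t ^ η * ∫ ζ, f (z 0 ζ) ∂μ)) ≤
      Real.exp (2 * K) * C₂ * t ^ (-b) := by
    calc _ ≤ Real.exp (2 * K + -t ^ η) := Real.exp_le_exp.mpr (by linarith)
      _ = Real.exp (2 * K) * Real.exp (-t ^ η) := Real.exp_add _ _
      _ ≤ Real.exp (2 * K) * C₂ * t ^ (-b) := by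
          rw [mul_assoc]
          gcongr
          exact hexp t ht
  rw [two_mul η, Real.rpow_add ht0, add_mul, ENNReal.ofReal_add (by positivity) (by positivity)]
  exact (hS.lintegral_measure_le_sceneryIntegral_le hz hf hf01 ht0.le (one_pos.trans_le hL)
    (t ^ η) 0).trans (add_le_add (hloc t ht 0) (ENNReal.ofReal_le_ofReal hChernoff))

end Annealed

section DyadicScales

variable {x y : ℝ}

lemma eventually_mul_rpow_le_rpow (C : ℝ) (hxy : x < y) : ∀ᶠ t in atTop, C * t ^ x ≤ t ^ y := by
  filter_upwards [(tendsto_rpow_atTop (sub_pos.mpr hxy)).eventually_ge_atTop C,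
    eventually_gt_atTop 0] with t ht ht0
  rwa [Real.rpow_sub ht0, le_div_iff₀ (by positivity)] at ht

lemma div_rpow_le_of_mem_Icc {t T : ℝ} (ht : 0 < t) (hT : T ∈ Icc t (2 * t)) (x : ℝ) :
    (T / t) ^ x ≤ 2 ^ |x| := by
  have h1 : 1 ≤ T / t := (one_le_div ht).mpr hT.1
  calc (T / t) ^ x ≤ (T / t) ^ |x| := Real.rpow_le_rpow_of_exponent_le h1 (le_abs_self x)
    _ ≤ 2 ^ |x| := by
        gcongr
        exact (div_le_iff₀ ht).mpr hT.2

lemma rpow_le_mul_rpow_left {t T : ℝ} (ht : 0 < t) (hT : T ∈ Icc t (2 * t)) (x : ℝ) :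
    T ^ x ≤ 2 ^ |x| * t ^ x := by
  have h := div_rpow_le_of_mem_Icc ht hT x
  rwa [Real.div_rpow (ht.le.trans hT.1) ht.le, div_le_iff₀ (by positivity)] at h

lemma rpow_le_mul_rpow_right {t T : ℝ} (ht : 0 < t) (hT : T ∈ Icc t (2 * t)) (x : ℝ) :
    t ^ x ≤ 2 ^ |x| * T ^ x := by
  have hT0 : 0 < T := ht.trans_le hT.1
  have h := div_rpow_le_of_mem_Icc ht hT (-x)
  rwa [abs_neg, Real.rpow_neg (by positivity), Real.div_rpow hT0.le ht.le, inv_div,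
    div_le_iff₀ (by positivity)] at h

lemma eventually_forall_mem_Icc_mul_rpow_le_left (C : ℝ) (hxy : x < y) :
    ∀ᶠ t in atTop, ∀ T ∈ Icc t (2 * t), C * T ^ x ≤ t ^ y := by
  filter_upwards [eventually_mul_rpow_le_rpow (|C| * 2 ^ |x|) hxy, eventually_gt_atTop 0]
    with t ht ht0 T hT
  calc C * T ^ x ≤ |C| * (2 ^ |x| * t ^ x) :=
        mul_le_mul (le_abs_self C) (rpow_le_mul_rpow_left ht0 hT x)
          (Real.rpow_nonneg (ht0.le.trans hT.1) x) (abs_nonneg C)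
    _ ≤ t ^ y := by rwa [← mul_assoc]

lemma eventually_forall_mem_Icc_mul_rpow_le_right (C : ℝ) (hxy : x < y) :
    ∀ᶠ t in atTop, ∀ T ∈ Icc t (2 * t), C * t ^ x ≤ T ^ y := by
  filter_upwards [eventually_mul_rpow_le_rpow (2 ^ |y| * C) hxy, eventually_gt_atTop 0]
    with t ht ht0 T hT
  refine le_of_mul_le_mul_left ?_ (show (0 : ℝ) < 2 ^ |y| by positivity)
  rw [← mul_assoc]
  exact ht.trans (rpow_le_mul_rpow_right ht0 hT y)

/-- The filter of the dyadic scales `T = 2^k`, `k → ∞`, along which the Borel–Cantelli lemma is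
applied. -/
noncomputable def dyadicAtTop : Filter ℝ :=
  map (fun k : ℕ => (2 : ℝ) ^ k) atTop

lemma dyadicAtTop_le_atTop : dyadicAtTop ≤ atTop :=
  tendsto_pow_atTop_atTop_of_one_lt one_lt_two

lemma eventually_exists_mem_Icc_of_dyadicAtTop {p : ℝ → Prop} (h : ∀ᶠ T in dyadicAtTop, p T) :
    ∀ᶠ t in atTop, ∃ T ∈ Icc t (2 * t), p T := by
  obtain ⟨k, hk⟩ := eventually_atTop.mp (eventually_map.mp h)
  filter_upwards [eventually_ge_atTop ((2 : ℝ) ^ k)] with t ht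
  obtain ⟨n, hn, hn'⟩ := exists_nat_pow_near ((one_le_pow₀ one_le_two).trans ht) one_lt_two
  refine ⟨2 ^ (n + 1), ⟨hn'.le, ?_⟩, hk _ ?_⟩
  · rw [pow_succ']
    gcongr
  · exact ((pow_lt_pow_iff_right₀ (one_lt_two (α := ℝ))).mp (ht.trans_lt hn')).le

lemma summable_two_pow_rpow (hx : x < 0) : Summable fun k : ℕ => ((2 : ℝ) ^ k) ^ x := by
  have hgeom (k : ℕ) : ((2 : ℝ) ^ k) ^ x = (2 ^ x) ^ k := (Real.rpow_pow_comm zero_le_two x k).symm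
  simp only [hgeom]
  exact summable_geometric_of_lt_one (by positivity)
    (Real.rpow_lt_one_of_one_lt_of_neg one_lt_two hx)

theorem ae_eventually_le_rpow_of_lintegral_le {Ω : Type*} [MeasurableSpace Ω] {μ : Measure Ω}
    {X : ℝ → Ω → ℝ≥0∞} (hX : ∀ T, Measurable (X T)) {C : ℝ}
    (h : ∀ᶠ T in atTop, ∫⁻ ω, X T ω ∂μ ≤ ENNReal.ofReal (C * T ^ x)) (hxy : x < y) :
    ∀ᵐ ω ∂μ, ∀ᶠ T in dyadicAtTop, X T ω ≤ ENNReal.ofReal (T ^ y) := by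
  obtain ⟨k₀, hk₀⟩ := eventually_atTop.mp (eventually_map.mp (dyadicAtTop_le_atTop h))
  let T (k : ℕ) : ℝ := 2 ^ (k + k₀)
  have hT (k : ℕ) : 0 < T k := by positivity
  have hmarkov (k : ℕ) : μ {ω | ENNReal.ofReal (T k ^ y) ≤ X (T k) ω} ≤
      ENNReal.ofReal (C * T k ^ (x - y)) := by
    have hpos : 0 < T k ^ y := Real.rpow_pos_of_pos (hT k) y
    refine (meas_ge_le_lintegral_div (hX (T k)).aemeasurable
      (ENNReal.ofReal_pos.mpr hpos).ne' ENNReal.ofReal_ne_top).trans ?_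
    rw [Real.rpow_sub (hT k), ← mul_div_assoc, ENNReal.ofReal_div_of_pos hpos]
    exact ENNReal.div_le_div_right (hk₀ (k + k₀) (Nat.le_add_left k₀ k)) _
  have hsummable : Summable fun k => C * T k ^ (x - y) :=
    ((summable_nat_add_iff k₀).mpr (summable_two_pow_rpow (sub_neg.mpr hxy))).mul_left C
  filter_upwards [ae_eventually_notMem
    (ne_top_of_le_ne_top hsummable.tsum_ofReal_ne_top (ENNReal.tsum_le_tsum hmarkov))] with ω hω
  rw [dyadicAtTop, eventually_map, ← map_add_atTop_eq_nat k₀, eventually_map]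
  exact hω.mono fun k hk => (not_le.mp hk).le

end DyadicScales

section SceneryTail

variable {d : ℕ} {α : ℝ} {Ωz : Type*} [MeasurableSpace Ωz] {μ : Measure Ωz}
  {z : (Fin d → ℤ) → Ωz → ℝ}

namespace IsScenery

lemma eventually_tail_le (hz : IsScenery d α μ z) {a : ℝ} (ha : a < α) :
    ∀ᶠ r in atTop, μ.real {ζ | r < z 0 ζ} ≤ r ^ (-a) := by
  filter_upwards [hz.tail.eventually (gt_mem_nhds (neg_lt_neg ha)), eventually_gt_atTop 1]
    with r hr hr1
  have hr0 : 0 < r := one_pos.trans hr1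
  rw [div_lt_iff₀ (Real.log_pos hr1), ← Real.log_rpow hr0] at hr
  rcases (measureReal_nonneg (μ := μ) (s := {ζ | r < z 0 ζ})).eq_or_lt with h | h
  · rw [← h]
    positivity
  · exact ((Real.log_lt_log_iff h (by positivity)).mp hr).le

lemma eventually_le_tail (hz : IsScenery d α μ z) (hα : 0 < α) {a : ℝ} (ha : α < a) :
    ∀ᶠ r in atTop, r ^ (-a) ≤ μ.real {ζ | r < z 0 ζ} := by
  filter_upwards [hz.tail.eventually (lt_mem_nhds (neg_lt_neg ha)),
    hz.tail.eventually (gt_mem_nhds (neg_lt_zero.mpr hα)), eventually_gt_atTop 1] with r hr hne hr1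
  have hr0 : 0 < r := one_pos.trans hr1
  rw [lt_div_iff₀ (Real.log_pos hr1), ← Real.log_rpow hr0] at hr
  rcases (measureReal_nonneg (μ := μ) (s := {ζ | r < z 0 ζ})).eq_or_lt with h | h
  · rw [Measure.real] at h
    rw [← h, Real.log_zero, zero_div] at hne
    exact absurd hne (lt_irrefl 0)
  · exact ((Real.log_lt_log_iff (by positivity) h).mp hr).le

lemma integrable_rpow (hz : IsScenery d α μ z) {b : ℝ} (hb : 0 < b) (hbα : b < α) :
    Integrable (fun ζ => z 0 ζ ^ b) μ := by
  have := hz.prob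
  obtain ⟨a, hba, haα⟩ := exists_between hbα
  obtain ⟨R, htail⟩ := eventually_atTop.mp (hz.eventually_tail_le haα)
  have hR0 : 0 < max R 1 := lt_max_of_lt_right one_pos
  have hbody : IntegrableOn (fun u : ℝ => u ^ (b - 1)) (Ioc 0 (max R 1)) :=
    (intervalIntegrable_iff_integrableOn_Ioc_of_le hR0.le).mp
      (intervalIntegral.intervalIntegrable_rpow' (by linarith))
  have htailint : IntegrableOn (fun u : ℝ => u ^ (-a + (b - 1))) (Ioi (max R 1)) :=
    integrableOn_Ioi_rpow_of_lt (by linarith) hR0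
  refine (lintegral_ofReal_ne_top_iff_integrable
    ((hz.meas 0).pow_const b).aestronglyMeasurable
    (ae_of_all _ fun ζ => Real.rpow_nonneg (hz.nonneg 0 ζ) b)).mp ?_
  rw [lintegral_rpow_eq_lintegral_meas_lt_mul μ (ae_of_all _ (hz.nonneg 0))
    (hz.meas 0).aemeasurable hb, ← Ioc_union_Ioi_eq_Ioi hR0.le]
  refine ENNReal.mul_ne_top ENNReal.ofReal_ne_top (ne_top_of_le_ne_top
    (ENNReal.add_ne_top.mpr ⟨hbody.lintegral_lt_top.ne, htailint.lintegral_lt_top.ne⟩)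
    ((lintegral_union_le _ _ _).trans (add_le_add ?_ ?_)))
  · exact lintegral_mono fun u => mul_le_of_le_one_left' prob_le_one
  · refine setLIntegral_mono' measurableSet_Ioi fun u hu => ?_
    have hu0 : 0 < u := hR0.trans hu
    rw [Real.rpow_add hu0, ENNReal.ofReal_mul (by positivity), ← ofReal_measureReal]
    gcongr
    exact htail u ((le_max_left R 1).trans (le_of_lt hu))

lemma integral_indicator_Ioi (hz : IsScenery d α μ z) (M : ℝ) (y : Fin d → ℤ) :
    ∫ ζ, (Ioi M).indicator 1 (z y ζ) ∂μ = μ.real {ζ | M < z 0 ζ} := by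
  have hident := (hz.ident y).measure_mem_eq (measurableSet_Ioi (a := M))
  exact (integral_indicator_one (hz.meas y measurableSet_Ioi)).trans
    (congrArg ENNReal.toReal hident)

end IsScenery

/-- The scenery value `r` in units of `M`, with the values above `M` removed. -/
noncomputable def truncDiv (M : ℝ) : ℝ → ℝ :=
  (Icc 0 M).indicator fun r => r / M

lemma measurable_truncDiv (M : ℝ) : Measurable (truncDiv M) :=
  (measurable_id.div_const M).indicator measurableSet_Icc

lemma truncDiv_mem_Icc {M : ℝ} (hM : 0 < M) (r : ℝ) : truncDiv M r ∈ Icc (0 : ℝ) 1 := by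
  rw [truncDiv, indicator_apply]
  split_ifs with hr
  · exact ⟨div_nonneg hr.1 hM.le, (div_le_one hM).mpr hr.2⟩
  · exact unitInterval.zero_mem

lemma indicator_one_mem_Icc {E : Type*} (s : Set E) (r : E) :
    s.indicator (1 : E → ℝ) r ∈ Icc (0 : ℝ) 1 :=
  ⟨indicator_nonneg (fun _ _ => zero_le_one) r, indicator_le_self' (fun _ _ => zero_le_one) r⟩

lemma truncDiv_le_rpow {M b r : ℝ} (hM : 0 < M) (hb : b ≤ 1) (hr : 0 ≤ r) :
    truncDiv M r ≤ M ^ (-b) * r ^ b := by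
  rw [truncDiv, indicator_apply]
  split_ifs with h
  · rw [Real.rpow_neg hM.le, mul_comm, ← div_eq_mul_inv, ← Real.div_rpow hr hM.le]
    exact Real.self_le_rpow_of_le_one (by positivity) ((div_le_one hM).mpr h.2) hb
  · positivity

lemma IsScenery.integral_truncDiv_le (hz : IsScenery d α μ z) {b M : ℝ} (hb : 0 < b) (hb1 : b ≤ 1)
    (hbα : b < α) (hM : 0 < M) :
    ∫ ζ, truncDiv M (z 0 ζ) ∂μ ≤ M ^ (-b) * ∫ ζ, z 0 ζ ^ b ∂μ := by
  rw [← integral_const_mul]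
  exact integral_mono_of_nonneg (ae_of_all _ fun ζ => (truncDiv_mem_Icc hM _).1)
    ((hz.integrable_rpow hb hbα).const_mul _)
    (ae_of_all _ fun ζ => truncDiv_le_rpow hM hb1 (hz.nonneg 0 ζ))

end SceneryTail

section AlmostSure

variable {d : ℕ} {α : ℝ} {Ω Ωz : Type*} [MeasurableSpace Ω] [MeasurableSpace Ωz]
  {P : (Fin d → ℤ) → Measure Ω} {S : ℝ → Ω → (Fin d → ℤ)}
  {μ : Measure Ωz} {z : (Fin d → ℤ) → Ωz → ℝ} {s : ℝ}

lemma mul_rpow_rpow_neg_le_one {T b : ℝ} (hT : 1 ≤ T) (hbs : 1 ≤ b * s) :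
    T * (T ^ s) ^ (-b) ≤ 1 := by
  have hT0 : 0 < T := one_pos.trans_le hT
  calc T * (T ^ s) ^ (-b) = T ^ (1 + s * -b) := by
        rw [← Real.rpow_mul hT0.le, Real.rpow_add hT0, Real.rpow_one]
    _ ≤ 1 := Real.rpow_le_one_of_one_le_of_nonpos hT (by linarith)

theorem IsCTSRW.ae_eventually_measure_le_sceneryIntegral_le (hS : IsCTSRW d P S)
    (hz : IsScenery d α μ z) (hd : 3 ≤ d) {η : ℝ} (hη : 0 < η) {f : ℝ → ℝ → ℝ}
    (hf : ∀ T, Measurable (f T)) (hf01 : ∀ᶠ T in atTop, ∀ r, f T r ∈ Icc (0 : ℝ) 1) {K : ℝ}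
    (hK : ∀ᶠ T in atTop, T * ∫ ζ, f T (z 0 ζ) ∂μ ≤ K) (b : ℝ) :
    ∀ᵐ ζ ∂μ, ∀ᶠ T in dyadicAtTop,
      P 0 {ω | ENNReal.ofReal (T ^ (2 * η)) ≤ sceneryIntegral (f T) z S T ζ ω} ≤
        ENNReal.ofReal (T ^ (-b)) := by
  have := hS.prob 0
  obtain ⟨C, hC⟩ := hS.exists_lintegral_measure_le_sceneryIntegral_le hz hd hη K (b + 1)
  refine ae_eventually_le_rpow_of_lintegral_le (C := C) (x := -(b + 1)) (fun T => ?_) ?_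
    (by linarith)
  · exact measurable_measure_prodMk_left (measurableSet_le measurable_const
      (hS.measurable_sceneryIntegral hz.meas (hf T) T))
  · filter_upwards [hf01, hK, eventually_ge_atTop 1] with T h01 hKT hT
    exact hC T hT (f T) (hf T) h01 hKT

theorem IsCTSRW.ae_eventually_measure_sceneryIntegral_truncDiv_le (hS : IsCTSRW d P S)
    (hz : IsScenery d α μ z) (hd : 3 ≤ d) (hα : 0 < α) {η : ℝ} (hη : 0 < η)
    (hs : max (1 / α) 1 < s) (b : ℝ) :
    ∀ᵐ ζ ∂μ, ∀ᶠ T in dyadicAtTop,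
      P 0 {ω | ENNReal.ofReal (T ^ (2 * η)) ≤ sceneryIntegral (truncDiv (T ^ s)) z S T ζ ω} ≤
        ENNReal.ofReal (T ^ (-b)) := by
  have hs0 : 0 < s := one_pos.trans ((le_max_right _ _).trans_lt hs)
  obtain ⟨β, hβ, hβ'⟩ : ∃ β, 1 / s < β ∧ β < min α 1 := by
    refine exists_between (lt_min ?_ ?_)
    · exact (one_div_lt hs0 hα).mpr ((le_max_left _ _).trans_lt hs)
    · exact (div_lt_one hs0).mpr ((le_max_right _ _).trans_lt hs)
  have hβ0 : 0 < β := (one_div_pos.mpr hs0).trans hβ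
  obtain ⟨hβα, hβ1⟩ := lt_min_iff.mp hβ'
  have hmoment : 0 ≤ ∫ ζ, z 0 ζ ^ β ∂μ :=
    integral_nonneg fun ζ => Real.rpow_nonneg (hz.nonneg 0 ζ) β
  refine hS.ae_eventually_measure_le_sceneryIntegral_le hz hd hη
    (f := fun T => truncDiv (T ^ s)) (K := ∫ ζ, z 0 ζ ^ β ∂μ)
    (fun T => measurable_truncDiv _) ?_ ?_ b
  · filter_upwards [eventually_gt_atTop 0] with T hT
    exact truncDiv_mem_Icc (Real.rpow_pos_of_pos hT s)
  · filter_upwards [eventually_ge_atTop 1] with T hT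
    have hT0 : 0 < T := one_pos.trans_le hT
    calc T * ∫ ζ, truncDiv (T ^ s) (z 0 ζ) ∂μ
        ≤ T * ((T ^ s) ^ (-β) * ∫ ζ, z 0 ζ ^ β ∂μ) := by
          gcongr
          exact hz.integral_truncDiv_le hβ0 hβ1.le hβα (Real.rpow_pos_of_pos hT0 s)
      _ = T * (T ^ s) ^ (-β) * ∫ ζ, z 0 ζ ^ β ∂μ := (mul_assoc _ _ _).symm
      _ ≤ ∫ ζ, z 0 ζ ^ β ∂μ :=
          mul_le_of_le_one_left hmoment
            (mul_rpow_rpow_neg_le_one hT ((div_lt_iff₀ hs0).mp hβ).le)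

theorem IsCTSRW.ae_eventually_measure_sceneryIntegral_indicator_le (hS : IsCTSRW d P S)
    (hz : IsScenery d α μ z) (hd : 3 ≤ d) (hα : 0 < α) {η : ℝ} (hη : 0 < η) (hs : 1 / α < s)
    (b : ℝ) :
    ∀ᵐ ζ ∂μ, ∀ᶠ T in dyadicAtTop,
      P 0 {ω | ENNReal.ofReal (T ^ (2 * η)) ≤
        sceneryIntegral ((Ioi (T ^ s)).indicator 1) z S T ζ ω} ≤ ENNReal.ofReal (T ^ (-b)) := by
  have hs0 : 0 < s := (one_div_pos.mpr hα).trans hs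
  obtain ⟨β, hβ, hβα⟩ := exists_between ((one_div_lt hα hs0).mp hs)
  refine hS.ae_eventually_measure_le_sceneryIntegral_le hz hd hη
    (f := fun T => (Ioi (T ^ s)).indicator 1) (K := 1)
    (fun T => measurable_one.indicator measurableSet_Ioi)
    (Eventually.of_forall fun T => indicator_one_mem_Icc _) ?_ b
  filter_upwards [(tendsto_rpow_atTop hs0).eventually (hz.eventually_tail_le hβα),
    eventually_ge_atTop 1] with T htail hT
  rw [hz.integral_indicator_Ioi]
  exact (mul_le_mul_of_nonneg_left htail (zero_le_one.trans hT)).trans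
    (mul_rpow_rpow_neg_le_one hT ((div_lt_iff₀ hs0).mp hβ).le)

theorem IsCTSRW.ae_eventually_tsum_green_le (hS : IsCTSRW d P S) (hz : IsScenery d α μ z)
    (hs : 0 < s) {v : ℝ} (hv : 1 - α * s < v) :
    ∀ᵐ ζ ∂μ, ∀ᶠ T in dyadicAtTop,
      ∑' y, {y | T ^ s < z y ζ}.indicator (green P S (2 * T) 0) y ≤ ENNReal.ofReal (T ^ v) := by
  have := hz.prob
  obtain ⟨a, hva, haα⟩ := exists_between (show (1 - v) / s < α by rw [div_lt_iff₀ hs]; linarith)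
  have hset (T : ℝ) (y : Fin d → ℤ) : MeasurableSet {ζ | T ^ s < z y ζ} :=
    hz.meas y measurableSet_Ioi
  have hswap (T : ℝ) (y : Fin d → ℤ) :
      (fun ζ => {y | T ^ s < z y ζ}.indicator (green P S (2 * T) 0) y)
        = {ζ | T ^ s < z y ζ}.indicator fun _ => green P S (2 * T) 0 y := rfl
  have hmeas (T : ℝ) (y : Fin d → ℤ) :
      Measurable fun ζ => {y | T ^ s < z y ζ}.indicator (green P S (2 * T) 0) y :=
    hswap T y ▸ measurable_const.indicator (hset T y)
  refine ae_eventually_le_rpow_of_lintegral_le (C := 2) (x := 1 - s * a)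
    (fun T => .tsum (hmeas T)) ?_ (by rw [div_lt_iff₀ hs] at hva; linarith)
  filter_upwards [(tendsto_rpow_atTop hs).eventually (hz.eventually_tail_le haα),
    eventually_gt_atTop 0] with T htail hT
  have hsite (y : Fin d → ℤ) :
      ∫⁻ ζ, {y | T ^ s < z y ζ}.indicator (green P S (2 * T) 0) y ∂μ
        = green P S (2 * T) 0 y * μ {ζ | T ^ s < z 0 ζ} := by
    rw [hswap, lintegral_indicator_const (hset T y)]
    exact congrArg _ ((hz.ident y).measure_mem_eq (measurableSet_Ioi (a := T ^ s)))
  rw [lintegral_tsum fun y => (hmeas T y).aemeasurable, tsum_congr hsite, ENNReal.tsum_mul_right,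
    hS.tsum_green, ← ofReal_measureReal, ← ENNReal.ofReal_mul (by positivity)]
  refine ENNReal.ofReal_le_ofReal ?_
  calc 2 * T * μ.real {ζ | T ^ s < z 0 ζ} ≤ 2 * T * (T ^ s) ^ (-a) := by gcongr
    _ = 2 * T ^ (1 - s * a) := by
        rw [← Real.rpow_mul hT.le, mul_neg, sub_eq_add_neg, Real.rpow_add hT, Real.rpow_one,
          mul_assoc]

/-- The lattice box `{0, …, ⌊c√T⌋}^d`, on the scale which the walk explores up to time `T`. -/
noncomputable def diffusiveBox (d : ℕ) (c T : ℝ) : Finset (Fin d → ℤ) :=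
  Fintype.piFinset fun _ => Finset.Icc 0 ⌊c * √T⌋

lemma le_card_diffusiveBox (d : ℕ) {c T : ℝ} (hc : 0 < c) (hT : 0 < T) :
    c ^ d * T ^ ((d : ℝ) / 2) ≤ (diffusiveBox d c T).card := by
  have hpow : (c * √T) ^ d = c ^ d * T ^ ((d : ℝ) / 2) := by
    rw [mul_pow, Real.sqrt_eq_rpow, ← Real.rpow_mul_natCast hT.le, one_div_mul_eq_div]
  have hfloor : 0 ≤ ⌊c * √T⌋ := Int.floor_nonneg.mpr (by positivity)
  have hedge : ((⌊c * √T⌋ + 1 - 0).toNat : ℝ) = ⌊c * √T⌋ + 1 := by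
    rw [sub_zero]
    exact_mod_cast Int.toNat_of_nonneg (Int.add_nonneg hfloor zero_le_one)
  rw [← hpow, diffusiveBox, Fintype.card_piFinset_const, Int.card_Icc, Nat.cast_pow, hedge]
  gcongr
  exact (Int.lt_floor_add_one _).le

lemma IsScenery.measure_sum_indicator_le (hz : IsScenery d α μ z) (F : Finset (Fin d → ℤ))
    {M l : ℝ} (hl : l ≤ F.card * μ.real {ζ | M < z 0 ζ} / 4) :
    μ.real {ζ | ∑ y ∈ F, (Ioi M).indicator 1 (z y ζ) ≤ l} ≤ Real.exp (-l) := by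
  have := hz.prob
  have hf : Measurable ((Ioi M).indicator (1 : ℝ → ℝ)) := measurable_one.indicator measurableSet_Ioi
  have hmean : ∑ y ∈ F, ∫ ζ, (Ioi M).indicator (1 : ℝ → ℝ) (z y ζ) ∂μ =
      F.card * μ.real {ζ | M < z 0 ζ} := by
    simp only [hz.integral_indicator_Ioi, Finset.sum_const, nsmul_eq_mul]
  have h := measure_sum_le_le_exp (hz.indep.comp _ fun _ => hf) (fun y => hf.comp (hz.meas y))
    (fun y ζ => indicator_one_mem_Icc _ _) F
  simp only [Function.comp_apply, hmean] at h
  exact (measureReal_mono fun ζ hζ => le_trans hζ hl).trans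
    (h.trans (Real.exp_le_exp.mpr (neg_le_neg hl)))

lemma IsScenery.eventually_rpow_le_card_mul_tail (hz : IsScenery d α μ z) (hα : 0 < α) {c : ℝ}
    (hc : 0 < c) (hs : 0 < s) {v : ℝ} (hv : v < d / 2 - α * s) :
    ∀ᶠ T in atTop, T ^ v ≤ (diffusiveBox d c T).card * μ.real {ζ | T ^ s < z 0 ζ} / 4 := by
  obtain ⟨a, hαa, hav⟩ := exists_between (show α < (d / 2 - v) / s by rw [lt_div_iff₀ hs]; linarith)
  have hexp : v < d / 2 + s * -a := by rw [lt_div_iff₀ hs] at hav; linarith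
  filter_upwards [(tendsto_rpow_atTop hs).eventually (hz.eventually_le_tail hα hαa),
    eventually_mul_rpow_le_rpow (4 / c ^ d) hexp, eventually_gt_atTop 0] with T htail hT hT0
  rw [div_mul_eq_mul_div, div_le_iff₀' (by positivity), Real.rpow_add hT0,
    Real.rpow_mul hT0.le] at hT
  rw [le_div_iff₀' four_pos]
  calc 4 * T ^ v ≤ c ^ d * (T ^ ((d : ℝ) / 2) * (T ^ s) ^ (-a)) := hT
    _ = c ^ d * T ^ ((d : ℝ) / 2) * (T ^ s) ^ (-a) := (mul_assoc _ _ _).symm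
    _ ≤ (diffusiveBox d c T).card * μ.real {ζ | T ^ s < z 0 ζ} := by
        gcongr
        exact le_card_diffusiveBox d hc hT0

theorem IsScenery.ae_eventually_le_sum_indicator (hz : IsScenery d α μ z) (hα : 0 < α) {c : ℝ}
    (hc : 0 < c) (hs : 0 < s) (hαs : α * s < d / 2) {v : ℝ} (hv : v < d / 2 - α * s) :
    ∀ᵐ ζ ∂μ, ∀ᶠ T in dyadicAtTop,
      T ^ v ≤ ∑ y ∈ diffusiveBox d c T, (Ioi (T ^ s)).indicator 1 (z y ζ) := by
  have := hz.prob
  obtain ⟨w, hvw, hw⟩ := exists_between (max_lt hv (sub_pos.mpr hαs))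
  obtain ⟨hvw, hw0⟩ := max_lt_iff.mp hvw
  obtain ⟨C, -, hC⟩ := exists_exp_neg_rpow_le hw0 2
  let E (T : ℝ) : Set Ωz :=
    {ζ | ∑ y ∈ diffusiveBox d c T, (Ioi (T ^ s)).indicator 1 (z y ζ) ≤ T ^ w}
  have hE (T : ℝ) : MeasurableSet (E T) :=
    measurableSet_le (Finset.measurable_fun_sum _ fun y _ =>
      (measurable_one.indicator measurableSet_Ioi).comp (hz.meas y)) measurable_const
  have hBC := ae_eventually_le_rpow_of_lintegral_le (μ := μ) (X := fun T => (E T).indicator 1)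
    (C := C) (x := -2) (y := -1) (fun T => measurable_one.indicator (hE T)) ?_ (by norm_num)
  · filter_upwards [hBC] with ζ hζ
    filter_upwards [hζ, dyadicAtTop_le_atTop (eventually_gt_atTop 1)] with T hT hT1
    have hnot : ζ ∉ E T := by
      intro hmem
      rw [indicator_of_mem hmem, Pi.one_apply, ENNReal.one_le_ofReal] at hT
      exact hT.not_gt (Real.rpow_lt_one_of_one_lt_of_neg hT1 (by norm_num))
    exact (Real.rpow_le_rpow_of_exponent_le hT1.le hvw.le).trans (not_le.mp hnot).le
  · filter_upwards [hz.eventually_rpow_le_card_mul_tail hα hc hs hw, eventually_ge_atTop 1]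
      with T hT hT1
    rw [lintegral_indicator_one (hE T), ← ofReal_measureReal]
    exact ENNReal.ofReal_le_ofReal ((hz.measure_sum_indicator_le _ hT).trans (hC T hT1))

end AlmostSure

section PathComparison

variable {E Ω Ωz : Type*} {S : ℝ → Ω → E} {z : E → Ωz → ℝ} {ζ : Ωz} {ω : Ω}

lemma sceneryIntegral_mono_time (f : ℝ → ℝ) {t T : ℝ} (h : t ≤ T) :
    sceneryIntegral f z S t ζ ω ≤ sceneryIntegral f z S T ζ ω :=
  lintegral_mono_set (Ioc_subset_Ioc_right h)

lemma sceneryIntegral_le_of_le_one {f : ℝ → ℝ} (hf : ∀ r, f r ≤ 1) (t : ℝ) :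
    sceneryIntegral f z S t ζ ω ≤ ENNReal.ofReal t := by
  calc sceneryIntegral f z S t ζ ω ≤ ∫⁻ _ in Ioc 0 t, 1 :=
        lintegral_mono fun u => ENNReal.ofReal_le_one.mpr (hf _)
    _ = ENNReal.ofReal t := by rw [setLIntegral_one, Real.volume_Ioc, sub_zero]

lemma sceneryIntegral_id_eq_mul_truncDiv (hz : ∀ y, 0 ≤ z y ζ) {M t : ℝ} (hM : 0 < M)
    (hle : ∀ u ∈ Icc 0 t, z (S u ω) ζ ≤ M) :
    sceneryIntegral id z S t ζ ω = ENNReal.ofReal M * sceneryIntegral (truncDiv M) z S t ζ ω := by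
  simp only [sceneryIntegral]
  rw [← lintegral_const_mul' _ _ ENNReal.ofReal_ne_top]
  refine setLIntegral_congr_fun measurableSet_Ioc fun u hu => ?_
  have hmem : z (S u ω) ζ ∈ Icc 0 M := ⟨hz _, hle u (Ioc_subset_Icc_self hu)⟩
  rw [← ENNReal.ofReal_mul hM.le, truncDiv, indicator_of_mem hmem, mul_div_cancel₀ _ hM.ne', id]

lemma mul_sceneryIntegral_indicator_le (hz : ∀ y, 0 ≤ z y ζ) {M : ℝ} (hM : 0 ≤ M) (t : ℝ) :
    ENNReal.ofReal M * sceneryIntegral ((Ioi M).indicator 1) z S t ζ ω ≤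
      sceneryIntegral id z S t ζ ω := by
  simp only [sceneryIntegral]
  rw [← lintegral_const_mul' _ _ ENNReal.ofReal_ne_top]
  refine lintegral_mono fun u => ?_
  rw [← ENNReal.ofReal_mul hM]
  refine ENNReal.ofReal_le_ofReal ?_
  rw [indicator_apply, Pi.one_apply, mul_ite, mul_one, mul_zero]
  split_ifs with h
  · exact (mem_Ioi.mp h).le
  · exact hz _

lemma exists_lt_of_sceneryIntegral_indicator_ne_zero {M t : ℝ}
    (h : sceneryIntegral ((Ioi M).indicator 1) z S t ζ ω ≠ 0) : ∃ u ∈ Icc 0 t, M < z (S u ω) ζ := by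
  contrapose! h
  rw [sceneryIntegral, setLIntegral_congr_fun (g := 0) measurableSet_Ioc, Pi.zero_def,
    lintegral_zero]
  intro u hu
  simp only [indicator_of_notMem (notMem_Ioi.mpr (h u (Ioc_subset_Icc_self hu))),
    ENNReal.ofReal_zero, Pi.zero_apply]

end PathComparison

section UpperBound

variable {d : ℕ} {α ρ : ℝ} {Ω Ωz : Type*} [MeasurableSpace Ω] [MeasurableSpace Ωz]
  {P : (Fin d → ℤ) → Measure Ω} {S : ℝ → Ω → (Fin d → ℤ)}
  {μ : Measure Ωz} {z : (Fin d → ℤ) → Ωz → ℝ}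

namespace IsCTSRW

lemma rwrs_eq_toReal {Ωz : Type*} {z : (Fin d → ℤ) → Ωz → ℝ} (hS : IsCTSRW d P S) {ζ : Ωz}
    (hz : ∀ y, 0 ≤ z y ζ) (t : ℝ) (ω : Ω) :
    rwrs d z S t ζ ω = (sceneryIntegral id z S t ζ ω).toReal :=
  integral_eq_lintegral_of_nonneg_ae (ae_of_all _ fun _ => hz _)
    ((measurable_of_countable fun y => z y ζ).comp (hS.measurable_path ω)).aestronglyMeasurable

lemma sceneryIntegral_ne_top {Ωz : Type*} {z : (Fin d → ℤ) → Ωz → ℝ} (hS : IsCTSRW d P S)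
    (f : ℝ → ℝ) {t : ℝ} {ω : Ω} (hfin : {y | ∃ u ∈ Icc 0 t, S u ω = y}.Finite) (ζ : Ωz) :
    sceneryIntegral f z S t ζ ω ≠ ∞ := by
  rw [sceneryIntegral, hS.lintegral_comp_path_eq_sum (F := hfin.toFinset)
    (fun u hu => hfin.mem_toFinset.mpr ⟨u, hu, rfl⟩) fun y => ENNReal.ofReal (f (z y ζ))]
  exact ENNReal.sum_ne_top.mpr fun y _ =>
    ENNReal.mul_ne_top ENNReal.ofReal_ne_top (hS.localTime_ne_top t y ω)

theorem measure_le_rwrs_and_eq_le {Ωz : Type*} {z : (Fin d → ℤ) → Ωz → ℝ} (hS : IsCTSRW d P S)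
    {ζ : Ωz} (hz : ∀ y, 0 ≤ z y ζ) {t T M w r : ℝ} (htT : t ≤ T) (hM : 0 < M) (hr : M * w ≤ r)
    (x : Fin d → ℤ) :
    P x {ω | r ≤ rwrs d z S t ζ ω ∧ S t ω = x} ≤
      P x {ω | (∃ u ∈ Icc 0 t, S u ω ∈ {y | M < z y ζ}) ∧ S t ω = x} +
        P x {ω | ENNReal.ofReal w ≤ sceneryIntegral (truncDiv M) z S T ζ ω} := by
  refine (measure_mono ?_).trans (measure_union_le _ _)
  rintro ω ⟨hA, hx⟩
  by_cases hvisit : ∃ u ∈ Icc 0 t, S u ω ∈ {y | M < z y ζ}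
  · exact Or.inl ⟨hvisit, hx⟩
  refine Or.inr (le_trans ?_ (sceneryIntegral_mono_time _ htT))
  have hle (u : ℝ) (hu : u ∈ Icc 0 t) : z (S u ω) ζ ≤ M :=
    not_lt.mp fun h => hvisit ⟨u, hu, h⟩
  refine (ENNReal.mul_le_mul_iff_right (ENNReal.ofReal_pos.mpr hM).ne'
    ENNReal.ofReal_ne_top).mp ?_
  calc ENNReal.ofReal M * ENNReal.ofReal w ≤ ENNReal.ofReal (rwrs d z S t ζ ω) := by
        rw [← ENNReal.ofReal_mul hM.le]
        exact ENNReal.ofReal_le_ofReal (hr.trans hA)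
    _ ≤ sceneryIntegral id z S t ζ ω := by
        rw [hS.rwrs_eq_toReal hz]
        exact ENNReal.ofReal_toReal_le
    _ = ENNReal.ofReal M * sceneryIntegral (truncDiv M) z S t ζ ω :=
        sceneryIntegral_id_eq_mul_truncDiv hz hM hle

lemma eventually_measure_visit_and_eq_le (hS : IsCTSRW d P S) {w v : ℝ} (hwv : w < v + d / 2) :
    ∀ᶠ t in atTop, ∀ T ∈ Icc t (2 * t), ∀ H : Set (Fin d → ℤ),
      ∑' y, H.indicator (green P S (2 * T) 0) y ≤ ENNReal.ofReal (T ^ w) →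
        P 0 {ω | (∃ u ∈ Icc 0 t, S u ω ∈ H) ∧ S t ω = 0} ≤ ENNReal.ofReal (t ^ v) := by
  obtain ⟨C, hC, hvisit⟩ := hS.exists_measure_visit_set_and_eq_le
  filter_upwards [eventually_forall_mem_Icc_mul_rpow_le_left C hwv, eventually_ge_atTop 1]
    with t hpow ht T hT H hgreen
  have ht0 : 0 < t := zero_lt_one.trans_le ht
  have htime : t + 1 ≤ 2 * T := by linarith [hT.1]
  calc P 0 {ω | (∃ u ∈ Icc 0 t, S u ω ∈ H) ∧ S t ω = 0}
      ≤ ENNReal.ofReal (C * t ^ (-(d / 2) : ℝ)) * ∑' y, H.indicator (green P S (t + 1) 0) y :=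
        hvisit t ht0 0 H
    _ ≤ ENNReal.ofReal (C * t ^ (-(d / 2) : ℝ)) * ENNReal.ofReal (T ^ w) := by
        gcongr
        exact (ENNReal.tsum_le_tsum fun y =>
          indicator_le_indicator (green_mono htime 0 y)).trans hgreen
    _ = ENNReal.ofReal (t ^ (-(d / 2) : ℝ) * (C * T ^ w)) := by
        rw [← ENNReal.ofReal_mul (by positivity)]
        ring_nf
    _ ≤ ENNReal.ofReal (t ^ (-(d / 2) : ℝ) * t ^ (v + d / 2)) := by
        gcongr
        exact hpow T hT
    _ = ENNReal.ofReal (t ^ v) := by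
        rw [← Real.rpow_add ht0]
        ring_nf

theorem ae_eventually_measure_rwrs_and_eq_le (hS : IsCTSRW d P S) (hz : IsScenery d α μ z)
    (hd : 3 ≤ d) (hα : 0 < α) (hρ : max (1 / α) 1 < ρ) {v : ℝ}
    (hv : -(α * ρ) + 1 - d / 2 < v) :
    ∀ᵐ ζ ∂μ, ∀ᶠ t in atTop,
      P 0 {ω | t ^ ρ ≤ rwrs d z S t ζ ω ∧ S t ω = 0} ≤ ENNReal.ofReal (t ^ v) := by
  obtain ⟨v₁, hv₁, hv₁v⟩ := exists_between hv
  have hρ' : (1 - d / 2 - v₁) / α < ρ := (div_lt_iff₀' hα).mpr (by linarith)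
  obtain ⟨s, hs, hsρ⟩ := exists_between (max_lt hρ hρ')
  have hs₁ : max (1 / α) 1 < s := (le_max_left _ _).trans_lt hs
  have hs0 : 0 < s := zero_lt_one.trans ((le_max_right _ _).trans_lt hs₁)
  have hs₂ : 1 - d / 2 - v₁ < α * s := (div_lt_iff₀' hα).mp ((le_max_right _ _).trans_lt hs)
  obtain ⟨w, hw, hw'⟩ := exists_between (show 1 - α * s < v₁ + d / 2 by linarith)
  obtain ⟨η, hη, hη'⟩ := exists_between (show 0 < (ρ - s) / 2 by linarith)
  filter_upwards [hS.ae_eventually_tsum_green_le hz hs0 hw,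
    hS.ae_eventually_measure_sceneryIntegral_truncDiv_le hz hd hα hη hs₁ (-v₁)]
    with ζ hgreen htrunc
  filter_upwards [eventually_exists_mem_Icc_of_dyadicAtTop (hgreen.and htrunc),
    hS.eventually_measure_visit_and_eq_le hw', eventually_gt_atTop 0,
    eventually_forall_mem_Icc_mul_rpow_le_left 1 (show s + 2 * η < ρ by linarith),
    eventually_forall_mem_Icc_mul_rpow_le_left 2 hv₁v]
    with t ⟨T, hT, hgreenT, htruncT⟩ hvisit ht hpow hsum
  have hT0 : 0 < T := ht.trans_le hT.1
  have hcut : T ^ s * T ^ (2 * η) ≤ t ^ ρ := by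
    rw [← Real.rpow_add hT0, ← one_mul (T ^ _)]
    exact hpow T hT
  calc P 0 {ω | t ^ ρ ≤ rwrs d z S t ζ ω ∧ S t ω = 0}
      ≤ ENNReal.ofReal (t ^ v₁) + ENNReal.ofReal (T ^ (- -v₁)) :=
        (hS.measure_le_rwrs_and_eq_le (hz.nonneg · ζ) hT.1 (Real.rpow_pos_of_pos hT0 s) hcut
          0).trans (add_le_add (hvisit T hT _ hgreenT) htruncT)
    _ = ENNReal.ofReal (t ^ v₁ + T ^ v₁) := by
        rw [neg_neg, ENNReal.ofReal_add (by positivity) (by positivity)]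
    _ ≤ ENNReal.ofReal (t ^ v) := by
        gcongr
        linarith [hsum T hT, hsum t ⟨le_rfl, by linarith⟩]

end IsCTSRW

end UpperBound

section PinnedLocalTime

variable {d : ℕ} {Ω : Type*} [MeasurableSpace Ω]
  {P : (Fin d → ℤ) → Measure Ω} {S : ℝ → Ω → (Fin d → ℤ)}

lemma abs_le_of_mem_diffusiveBox {c T : ℝ} {y : Fin d → ℤ} (hy : y ∈ diffusiveBox d c T)
    (j : Fin d) : |(y j : ℝ)| ≤ c * √T := by
  obtain ⟨h0, hle⟩ := Finset.mem_Icc.mp (Fintype.mem_piFinset.mp hy j)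
  rw [abs_of_nonneg (Int.cast_nonneg h0)]
  exact Int.le_floor.mp hle

namespace IsCTSRW

lemma setLIntegral_localTime (hS : IsCTSRW d P S) (t : ℝ) (x y : Fin d → ℤ) :
    ∫⁻ ω in {ω | S t ω = x}, localTime S t y ω ∂P x =
      ∫⁻ u in Ioc 0 t, P x {ω | S u ω = y ∧ S t ω = x} := by
  have := hS.prob x
  have hmeas : MeasurableSet {p : Ω × ℝ | S p.2 p.1 = y} :=
    (hS.meas.comp measurable_swap) (measurableSet_singleton y)
  have hfubini := (Measure.prod_apply (μ := (P x).restrict {ω | S t ω = x})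
    (ν := volume.restrict (Ioc 0 t)) hmeas).symm.trans (Measure.prod_apply_symm hmeas)
  exact hfubini.trans (lintegral_congr fun u =>
    Measure.restrict_apply (measurable_prodMk_right hmeas))

lemma exists_le_measure_eq_and_eq (hS : IsCTSRW d P S) :
    ∃ δ > 0, ∃ c > 0, ∀ t : ℝ, 4 ≤ t → ∀ u ∈ Icc (t / 4) (3 * t / 4), ∀ x y : Fin d → ℤ,
      (∀ j, |((x j - y j : ℤ) : ℝ)| ≤ δ * √t) →
        ENNReal.ofReal (c * t ^ (-d : ℝ)) ≤ P x {ω | S u ω = y ∧ S t ω = x} := by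
  obtain ⟨δ, hδ, c, hc, hkernel⟩ := exists_le_heatKernel d
  refine ⟨δ / 2, by positivity, c ^ 2, by positivity, fun t ht u hu x y hxy => ?_⟩
  have ht0 : 0 < t := by linarith
  have hle {r : ℝ} (hr : t ≤ 2 ^ 2 * r) (hrt : r ≤ t) {v w : Fin d → ℤ}
      (hvw : ∀ j, |((v j - w j : ℤ) : ℝ)| ≤ δ / 2 * √t) :
      c * t ^ (-(d / 2) : ℝ) ≤ heatKernel d r v w := by
    have hsqrt : √t ≤ 2 * √r := by
      simpa only [Real.sqrt_mul (sq_nonneg (2 : ℝ)), Real.sqrt_sq zero_le_two]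
        using Real.sqrt_le_sqrt hr
    calc c * t ^ (-(d / 2) : ℝ) ≤ c * r ^ (-(d / 2) : ℝ) :=
          mul_le_mul_of_nonneg_left (Real.rpow_le_rpow_of_nonpos (by linarith) hrt
            (neg_nonpos.mpr (by positivity))) hc.le
      _ ≤ heatKernel d r v w := hkernel r (by linarith) v w fun j => (hvw j).trans (by
          rw [div_mul_eq_mul_div, div_le_iff₀ two_pos, mul_assoc, mul_comm _ (2 : ℝ)]
          gcongr)
  have hu0 : 0 ≤ u := by linarith [hu.1]
  rw [hS.measure_eq_and_eq x hu0 (by linarith [hu.2]), hS.transProb_eq_ofReal hu0,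
    hS.transProb_eq_ofReal (by linarith [hu.2]), ← ENNReal.ofReal_mul (heatKernel_nonneg d hu0 x y)]
  refine ENNReal.ofReal_le_ofReal ?_
  calc c ^ 2 * t ^ (-d : ℝ) = c * t ^ (-(d / 2) : ℝ) * (c * t ^ (-(d / 2) : ℝ)) := by
        rw [mul_mul_mul_comm, ← Real.rpow_add ht0, ← sq, ← neg_add, add_halves]
    _ ≤ heatKernel d u x y * heatKernel d (t - u) y x := by
        refine mul_le_mul (hle (by linarith [hu.1]) (by linarith [hu.2]) hxy)
          (hle (by linarith [hu.2]) (by linarith) fun j => ?_) (by positivity)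
          (heatKernel_nonneg d hu0 x y)
        rw [← neg_sub, Int.cast_neg, abs_neg]
        exact hxy j

theorem exists_le_setLIntegral_localTime (hS : IsCTSRW d P S) :
    ∃ δ > 0, ∃ c > 0, ∀ t : ℝ, 4 ≤ t → ∀ x y : Fin d → ℤ,
      (∀ j, |((x j - y j : ℤ) : ℝ)| ≤ δ * √t) →
        ENNReal.ofReal (c * t ^ (1 - d : ℝ)) ≤ ∫⁻ ω in {ω | S t ω = x}, localTime S t y ω ∂P x := by
  obtain ⟨δ, hδ, c, hc, hbridge⟩ := hS.exists_le_measure_eq_and_eq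
  refine ⟨δ, hδ, c / 2, by positivity, fun t ht x y hxy => ?_⟩
  have ht0 : 0 < t := by linarith
  rw [hS.setLIntegral_localTime]
  calc ENNReal.ofReal (c / 2 * t ^ (1 - d : ℝ))
      = ∫⁻ _ in Ioc (t / 4) (3 * t / 4), ENNReal.ofReal (c * t ^ (-d : ℝ)) := by
        rw [setLIntegral_const, Real.volume_Ioc, ← ENNReal.ofReal_mul (by positivity),
          sub_eq_add_neg, Real.rpow_add ht0, Real.rpow_one]
        ring_nf
    _ ≤ ∫⁻ u in Ioc (t / 4) (3 * t / 4), P x {ω | S u ω = y ∧ S t ω = x} :=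
        setLIntegral_mono' measurableSet_Ioc fun u hu =>
          hbridge t ht u (Ioc_subset_Icc_self hu) x y hxy
    _ ≤ ∫⁻ u in Ioc 0 t, P x {ω | S u ω = y ∧ S t ω = x} :=
        lintegral_mono_set (Ioc_subset_Ioc (by linarith) (by linarith))

end IsCTSRW

end PinnedLocalTime

section LowerBound

variable {d : ℕ} {α ρ : ℝ} {Ω Ωz : Type*} [MeasurableSpace Ω] [MeasurableSpace Ωz]
  {P : (Fin d → ℤ) → Measure Ω} {S : ℝ → Ω → (Fin d → ℤ)}
  {μ : Measure Ωz} {z : (Fin d → ℤ) → Ωz → ℝ}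

lemma lintegral_le_mul_measure_add {ν : Measure Ω} {X : Ω → ℝ≥0∞} (hX : Measurable X)
    {B : ℝ≥0∞} (hB : ∀ ω, X ω ≤ B) (w W : ℝ≥0∞) :
    ∫⁻ ω, X ω ∂ν ≤ w * ν {ω | X ω ≠ 0} + B * ν {ω | W ≤ X ω} + W * ν {ω | w < X ω} := by
  have hne : MeasurableSet {ω | X ω ≠ 0} := hX (measurableSet_singleton 0).compl
  have hge : MeasurableSet {ω | W ≤ X ω} := measurableSet_le measurable_const hX
  have hgt : MeasurableSet {ω | w < X ω} := measurableSet_lt measurable_const hX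
  rw [← lintegral_indicator_const hne, ← lintegral_indicator_const hge,
    ← lintegral_indicator_const hgt, ← lintegral_add_right _ (measurable_const.indicator hge),
    ← lintegral_add_right _ (measurable_const.indicator hgt)]
  refine lintegral_mono fun ω => ?_
  simp only [indicator_apply, mem_ofPred_eq]
  rcases eq_or_ne (X ω) 0 with h0 | h0
  · exact h0.trans_le zero_le
  rcases le_or_gt W (X ω) with hW | hW
  · rw [if_pos hW]
    exact (hB ω).trans (le_add_right le_add_self)
  rcases lt_or_ge w (X ω) with hw | hw
  · rw [if_pos hw]
    exact hW.le.trans le_add_self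
  · rw [if_pos h0]
    exact hw.trans (le_add_right le_self_add)

namespace IsCTSRW

lemma le_rwrs_of_lt_sceneryIntegral {Ωz : Type*} {z : (Fin d → ℤ) → Ωz → ℝ} (hS : IsCTSRW d P S)
    {ζ : Ωz} (hz : ∀ y, 0 ≤ z y ζ) {t M w r : ℝ} (hM : 0 ≤ M) (hr : r ≤ M * w) {ω : Ω}
    (hfin : {y | ∃ u ∈ Icc 0 t, S u ω = y}.Finite)
    (hw : ENNReal.ofReal w < sceneryIntegral ((Ioi M).indicator 1) z S t ζ ω) :
    r ≤ rwrs d z S t ζ ω := by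
  rw [hS.rwrs_eq_toReal hz, ← ENNReal.ofReal_le_iff_le_toReal (hS.sceneryIntegral_ne_top _ hfin ζ)]
  calc ENNReal.ofReal r ≤ ENNReal.ofReal M * ENNReal.ofReal w := by
        rw [← ENNReal.ofReal_mul hM]
        exact ENNReal.ofReal_le_ofReal hr
    _ ≤ ENNReal.ofReal M * sceneryIntegral ((Ioi M).indicator 1) z S t ζ ω := by gcongr
    _ ≤ sceneryIntegral id z S t ζ ω := mul_sceneryIntegral_indicator_le hz hM t

theorem setLIntegral_sceneryIntegral_indicator_le (hS : IsCTSRW d P S)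
    (hz : ∀ y, Measurable (z y)) {ζ : Ωz} (hz0 : ∀ y, 0 ≤ z y ζ) {t T M w r : ℝ} (htT : t ≤ T)
    (hM : 0 ≤ M) (hr : r ≤ M * w) (W : ℝ≥0∞) (x : Fin d → ℤ) :
    ∫⁻ ω in {ω | S t ω = x}, sceneryIntegral ((Ioi M).indicator 1) z S t ζ ω ∂P x ≤
      ENNReal.ofReal w * P x {ω | (∃ u ∈ Icc 0 t, S u ω ∈ {y | M < z y ζ}) ∧ S t ω = x} +
        ENNReal.ofReal t * P x {ω | W ≤ sceneryIntegral ((Ioi M).indicator 1) z S T ζ ω} +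
        W * P x {ω | r ≤ rwrs d z S t ζ ω ∧ S t ω = x} := by
  have hmeas : Measurable (sceneryIntegral ((Ioi M).indicator 1) z S t ζ) :=
    (hS.measurable_sceneryIntegral hz (measurable_one.indicator measurableSet_Ioi) t).comp
      measurable_prodMk_left
  have hpin : MeasurableSet {ω | S t ω = x} := hS.measurableSet_eq t x
  have hle (ω : Ω) : sceneryIntegral ((Ioi M).indicator 1) z S t ζ ω ≤ ENNReal.ofReal t :=
    sceneryIntegral_le_of_le_one (fun r => (indicator_one_mem_Icc (Ioi M) r).2) t
  refine (lintegral_le_mul_measure_add hmeas hle (ENNReal.ofReal w) W).trans ?_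
  simp only [Measure.restrict_apply' hpin]
  gcongr _ * ?_ + _ * ?_ + _ * ?_
  · exact measure_mono fun ω hω => ⟨exists_lt_of_sceneryIntegral_indicator_ne_zero hω.1, hω.2⟩
  · exact measure_mono fun ω hω => le_trans hω.1 (sceneryIntegral_mono_time _ htT)
  · refine measure_mono_ae ?_
    filter_upwards [hS.ae_finite_range x] with ω hfin hω
    exact ⟨hS.le_rwrs_of_lt_sceneryIntegral hz0 hM hr (hfin t) hω.1, hω.2⟩

lemma mul_sum_le_setLIntegral_sceneryIntegral {Ωz : Type*} {z : (Fin d → ℤ) → Ωz → ℝ}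
    (hS : IsCTSRW d P S) {f : ℝ → ℝ} (hf : ∀ r, 0 ≤ f r) (ζ : Ωz) {t q : ℝ} (hq : 0 ≤ q)
    {F : Finset (Fin d → ℤ)} (x : Fin d → ℤ)
    (hF : ∀ y ∈ F, ENNReal.ofReal q ≤ ∫⁻ ω in {ω | S t ω = x}, localTime S t y ω ∂P x) :
    ENNReal.ofReal (q * ∑ y ∈ F, f (z y ζ)) ≤
      ∫⁻ ω in {ω | S t ω = x}, sceneryIntegral f z S t ζ ω ∂P x := by
  calc ENNReal.ofReal (q * ∑ y ∈ F, f (z y ζ))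
      = ∑ y ∈ F, ENNReal.ofReal (f (z y ζ)) * ENNReal.ofReal q := by
        rw [mul_comm, ENNReal.ofReal_mul' hq, ENNReal.ofReal_sum_of_nonneg fun y _ => hf _,
          Finset.sum_mul]
    _ ≤ ∑ y ∈ F, ENNReal.ofReal (f (z y ζ)) *
          ∫⁻ ω in {ω | S t ω = x}, localTime S t y ω ∂P x :=
        Finset.sum_le_sum fun y hy => mul_le_mul_right (hF y hy) _
    _ = ∫⁻ ω in {ω | S t ω = x}, ∑ y ∈ F, ENNReal.ofReal (f (z y ζ)) * localTime S t y ω ∂P x := by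
        simp only [lintegral_finsetSum _ fun y _ => (hS.measurable_localTime t y).const_mul _,
          lintegral_const_mul _ (hS.measurable_localTime t _)]
    _ ≤ ∫⁻ ω in {ω | S t ω = x}, sceneryIntegral f z S t ζ ω ∂P x := by
        refine lintegral_mono fun ω => ?_
        rw [sceneryIntegral, hS.lintegral_comp_path t ω fun y => ENNReal.ofReal (f (z y ζ))]
        exact ENNReal.sum_le_tsum F

theorem exists_eventually_le_setLIntegral_sceneryIntegral {Ωz : Type*}
    {z : (Fin d → ℤ) → Ωz → ℝ} (hS : IsCTSRW d P S) :
    ∃ κ > 0, ∀ C g g' : ℝ, g' < g → ∀ᶠ t in atTop, ∀ T ∈ Icc t (2 * t), ∀ f : ℝ → ℝ,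
      (∀ r, 0 ≤ f r) → ∀ ζ : Ωz, T ^ g ≤ ∑ y ∈ diffusiveBox d κ T, f (z y ζ) →
        ENNReal.ofReal (C * t ^ (1 - d + g')) ≤
          ∫⁻ ω in {ω | S t ω = 0}, sceneryIntegral f z S t ζ ω ∂P 0 := by
  obtain ⟨δ, hδ, c, hc, hlocal⟩ := hS.exists_le_setLIntegral_localTime
  refine ⟨δ / 2, by positivity, fun C g g' hg => ?_⟩
  filter_upwards [eventually_forall_mem_Icc_mul_rpow_le_right (C / c) hg, eventually_ge_atTop 4]
    with t hpow ht T hT f hf ζ hsum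
  have ht0 : 0 < t := by linarith
  have hsqrt : √T ≤ 2 * √t := by
    simpa only [Real.sqrt_mul (sq_nonneg (2 : ℝ)), Real.sqrt_sq zero_le_two]
      using Real.sqrt_le_sqrt (show T ≤ 2 ^ 2 * t by linarith [hT.2])
  have hbox (y) (hy : y ∈ diffusiveBox d (δ / 2) T) :
      ENNReal.ofReal (c * t ^ (1 - d : ℝ)) ≤
        ∫⁻ ω in {ω | S t ω = 0}, localTime S t y ω ∂P 0 := by
    refine hlocal t ht 0 y fun j => ?_
    rw [Pi.zero_apply, zero_sub, Int.cast_neg, abs_neg]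
    calc |(y j : ℝ)| ≤ δ / 2 * √T := abs_le_of_mem_diffusiveBox hy j
      _ ≤ δ / 2 * (2 * √t) := by gcongr
      _ = δ * √t := by ring
  refine le_trans (ENNReal.ofReal_le_ofReal ?_)
    (hS.mul_sum_le_setLIntegral_sceneryIntegral hf ζ (by positivity) 0 hbox)
  calc C * t ^ (1 - d + g') = c * t ^ (1 - d : ℝ) * (C / c * t ^ g') := by
        rw [Real.rpow_add ht0]
        field_simp
    _ ≤ c * t ^ (1 - d : ℝ) * ∑ y ∈ diffusiveBox d (δ / 2) T, f (z y ζ) := by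
        gcongr
        exact (hpow T hT).trans hsum

end IsCTSRW

lemma ofReal_rpow_le_of_three_mul_le {t y v : ℝ} (ht : 0 < t) {p : ℝ≥0∞}
    (h : ENNReal.ofReal (3 * t ^ y) ≤
      ENNReal.ofReal (t ^ y) + ENNReal.ofReal (t ^ y) + ENNReal.ofReal (t ^ (y - v)) * p) :
    ENNReal.ofReal (t ^ v) ≤ p := by
  have hy : 0 ≤ t ^ y := by positivity
  have hsplit : ENNReal.ofReal (3 * t ^ y) =
      ENNReal.ofReal (t ^ y) + ENNReal.ofReal (t ^ y) + ENNReal.ofReal (t ^ y) := by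
    rw [← ENNReal.ofReal_add hy hy, ← ENNReal.ofReal_add (by positivity) hy]
    ring_nf
  rw [hsplit, ENNReal.add_le_add_iff_left (by finiteness)] at h
  refine (ENNReal.mul_le_mul_iff_right (ENNReal.ofReal_pos.mpr
    (Real.rpow_pos_of_pos ht (y - v))).ne' ENNReal.ofReal_ne_top).mp (le_of_eq_of_le ?_ h)
  rw [← ENNReal.ofReal_mul (by positivity), ← Real.rpow_add ht, sub_add_cancel]

lemma exists_gt_forall_lt_of_lt_div {α ρ D v : ℝ} (hα : 0 < α) (hρ : ρ < D / (2 * α))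
    (hv : v < -(α * ρ) + 1 - D / 2) :
    ∃ s > ρ, ∃ δ > 0, 4 * δ < s - ρ ∧ 4 * δ < D / 2 - α * s ∧ 4 * δ < 1 - D / 2 - α * s - v := by
  rw [← div_div] at hρ
  have hρv : ρ < (1 - D / 2 - v) / α := (lt_div_iff₀' hα).mpr (by linarith)
  obtain ⟨s, hρs, hs⟩ := exists_between (lt_min hρ hρv)
  have hs₁ : α * s < D / 2 := (lt_div_iff₀' hα).mp (hs.trans_le (min_le_left _ _))
  have hs₂ : α * s < 1 - D / 2 - v := (lt_div_iff₀' hα).mp (hs.trans_le (min_le_right _ _))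
  obtain ⟨δ, hδ, hδ'⟩ := exists_between (show
    0 < min (s - ρ) (min (D / 2 - α * s) (1 - D / 2 - α * s - v)) / 4 from
      div_pos (lt_min (by linarith) (lt_min (by linarith) (by linarith))) four_pos)
  rw [lt_div_iff₀' four_pos, lt_min_iff, lt_min_iff] at hδ'
  exact ⟨s, hρs, δ, hδ, hδ'⟩

theorem IsCTSRW.exists_eventually_le_measure_rwrs_and_eq (hS : IsCTSRW d P S)
    (hz : IsScenery d α μ z) {v s δ : ℝ} (hs : 0 < s) (hδ : 0 < δ) (hδρ : 4 * δ < s - ρ)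
    (hδα : 4 * δ < d / 2 - α * s) (hδv : 4 * δ < 1 - d / 2 - α * s - v) :
    ∃ κ > 0, ∀ᶠ t in atTop, ∀ T ∈ Icc t (2 * t), ∀ ζ,
      T ^ (d / 2 - α * s - δ) ≤ ∑ y ∈ diffusiveBox d κ T, (Ioi (T ^ s)).indicator 1 (z y ζ) →
      P 0 {ω | ENNReal.ofReal (T ^ (2 * δ)) ≤
        sceneryIntegral ((Ioi (T ^ s)).indicator 1) z S T ζ ω} ≤ ENNReal.ofReal (T ^ (-d : ℝ)) →
      ∑' y, {y | T ^ s < z y ζ}.indicator (green P S (2 * T) 0) y ≤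
        ENNReal.ofReal (T ^ (1 - α * s + δ)) →
      ENNReal.ofReal (t ^ v) ≤ P 0 {ω | t ^ ρ ≤ rwrs d z S t ζ ω ∧ S t ω = 0} := by
  obtain ⟨κ, hκ, hlocal⟩ := hS.exists_eventually_le_setLIntegral_sceneryIntegral (z := z)
  let y : ℝ := 1 - d + (d / 2 - α * s - 2 * δ)
  refine ⟨κ, hκ, ?_⟩
  filter_upwards [hlocal 3 (d / 2 - α * s - δ) (d / 2 - α * s - 2 * δ) (by linarith),
    hS.eventually_measure_visit_and_eq_le (w := 1 - α * s + δ) (v := 1 - α * s - d / 2 + 2 * δ)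
      (by linarith), eventually_forall_mem_Icc_mul_rpow_le_left 1
        (show 2 * δ < y - v by simp only [y]; linarith), eventually_ge_atTop 1]
    with t hlocal hvisit hpow ht T hT ζ hmany hlong hgreen
  have ht0 : 0 < t := zero_lt_one.trans_le ht
  have hT0 : 0 < T := ht0.trans_le hT.1
  have hcut : t ^ ρ ≤ T ^ s * t ^ (ρ - s) := by
    rw [← add_sub_cancel s ρ, Real.rpow_add ht0, add_sub_cancel]
    gcongr
    exact hT.1
  refine ofReal_rpow_le_of_three_mul_le ht0 (y := y) (((hlocal T hT _
    (fun r => (indicator_one_mem_Icc _ r).1) ζ hmany).trans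
      (hS.setLIntegral_sceneryIntegral_indicator_le hz.meas (hz.nonneg · ζ) hT.1 (by positivity)
        hcut (ENNReal.ofReal (T ^ (2 * δ))) 0)).trans ?_)
  gcongr ?_ + ?_ + ENNReal.ofReal ?_ * _
  · refine (mul_le_mul_right (hvisit T hT _ hgreen) _).trans ?_
    rw [← ENNReal.ofReal_mul (by positivity), ← Real.rpow_add ht0]
    exact ENNReal.ofReal_le_ofReal
      (Real.rpow_le_rpow_of_exponent_le ht (by simp only [y]; linarith))
  · refine (mul_le_mul_right hlong _).trans ?_
    rw [← ENNReal.ofReal_mul ht0.le]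
    refine ENNReal.ofReal_le_ofReal ?_
    calc t * T ^ (-d : ℝ) ≤ t * t ^ (-d : ℝ) := mul_le_mul_of_nonneg_left
          (Real.rpow_le_rpow_of_nonpos ht0 hT.1 (neg_nonpos.mpr d.cast_nonneg)) ht0.le
      _ = t ^ (1 - d : ℝ) := by rw [sub_eq_add_neg, Real.rpow_add ht0, Real.rpow_one]
      _ ≤ t ^ y := Real.rpow_le_rpow_of_exponent_le ht (by simp only [y]; linarith)
  · rw [← one_mul (T ^ _)]
    exact hpow T hT

theorem IsCTSRW.ae_eventually_le_measure_rwrs_and_eq (hS : IsCTSRW d P S)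
    (hz : IsScenery d α μ z) (hd : 3 ≤ d) (hα : 0 < α) (hρ₁ : 1 / α < ρ)
    (hρ₂ : ρ < d / (2 * α)) {v : ℝ} (hv : v < -(α * ρ) + 1 - d / 2) :
    ∀ᵐ ζ ∂μ, ∀ᶠ t in atTop,
      ENNReal.ofReal (t ^ v) ≤ P 0 {ω | t ^ ρ ≤ rwrs d z S t ζ ω ∧ S t ω = 0} := by
  obtain ⟨s, hρs, δ, hδ, hδρ, hδα, hδv⟩ := exists_gt_forall_lt_of_lt_div hα hρ₂ hv
  have hsα : 1 / α < s := hρ₁.trans hρs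
  have hs : 0 < s := (one_div_pos.mpr hα).trans hsα
  obtain ⟨κ, hκ, hlower⟩ :=
    hS.exists_eventually_le_measure_rwrs_and_eq hz hs hδ hδρ hδα hδv
  filter_upwards [hz.ae_eventually_le_sum_indicator hα hκ hs (by linarith)
      (sub_lt_self (d / 2 - α * s) hδ),
    hS.ae_eventually_measure_sceneryIntegral_indicator_le hz hd hα hδ hsα d,
    hS.ae_eventually_tsum_green_le hz hs (lt_add_of_pos_right (1 - α * s) hδ)]
    with ζ hmany hlong hgreen
  filter_upwards [eventually_exists_mem_Icc_of_dyadicAtTop (hmany.and (hlong.and hgreen)), hlower]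
    with t ⟨T, hT, hmanyT, hlongT, hgreenT⟩ hlower
  exact hlower T hT ζ hmanyT hlongT hgreenT

end LowerBound

section LogAsymptotics

variable {t v : ℝ} {p : ℝ≥0∞}

lemma le_log_toReal_div_log (ht : 1 < t) (hp : p ≠ ∞) (h : ENNReal.ofReal (t ^ v) ≤ p) :
    v ≤ Real.log p.toReal / Real.log t := by
  have hpow : 0 < t ^ v := Real.rpow_pos_of_pos (zero_lt_one.trans ht) v
  rw [le_div_iff₀ (Real.log_pos ht), ← Real.log_rpow (zero_lt_one.trans ht)]
  exact Real.log_le_log hpow ((ENNReal.ofReal_le_iff_le_toReal hp).mp h)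

lemma log_toReal_div_log_le (ht : 1 < t) (hp : p ≠ 0) (h : p ≤ ENNReal.ofReal (t ^ v)) :
    Real.log p.toReal / Real.log t ≤ v := by
  have hpow : 0 ≤ t ^ v := Real.rpow_nonneg (zero_le_one.trans ht.le) v
  have hp' : p ≠ ∞ := ne_top_of_le_ne_top ENNReal.ofReal_ne_top h
  rw [div_le_iff₀ (Real.log_pos ht), ← Real.log_rpow (zero_lt_one.trans ht)]
  exact Real.log_le_log (ENNReal.toReal_pos hp hp') (ENNReal.toReal_le_of_le_ofReal hpow h)

theorem ae_tendsto_log_toReal_div_log {Ω : Type*} [MeasurableSpace Ω] {μ : Measure Ω}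
    {p : Ω → ℝ → ℝ≥0∞} {L : ℝ}
    (hupper : ∀ v > L, ∀ᵐ ω ∂μ, ∀ᶠ t in atTop, p ω t ≤ ENNReal.ofReal (t ^ v))
    (hlower : ∀ v < L, ∀ᵐ ω ∂μ, ∀ᶠ t in atTop, ENNReal.ofReal (t ^ v) ≤ p ω t) :
    ∀ᵐ ω ∂μ, Tendsto (fun t => Real.log (p ω t).toReal / Real.log t) atTop (nhds L) := by
  obtain ⟨a, -, ha, haL⟩ := exists_seq_strictMono_tendsto L
  obtain ⟨b, -, hb, hbL⟩ := exists_seq_strictAnti_tendsto L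
  filter_upwards [ae_all_iff.mpr fun n => hlower (a n) (ha n),
    ae_all_iff.mpr fun n => hupper (b n) (hb n)] with ω hlow hupp
  refine tendsto_order.mpr ⟨fun l hl => ?_, fun l hl => ?_⟩
  · obtain ⟨n, hn⟩ := (haL.eventually_const_lt hl).exists
    filter_upwards [hlow n, hupp 0, eventually_gt_atTop 1] with t hle hfin ht
    have hp : p ω t ≠ ∞ := ne_top_of_le_ne_top ENNReal.ofReal_ne_top hfin
    exact hn.trans_le (le_log_toReal_div_log ht hp hle)
  · obtain ⟨n, hn⟩ := (hbL.eventually_lt_const hl).exists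
    filter_upwards [hupp n, hlow 0, eventually_gt_atTop 1] with t hle hpos ht
    have hp : p ω t ≠ 0 := (lt_of_lt_of_le (ENNReal.ofReal_pos.mpr
      (Real.rpow_pos_of_pos (zero_lt_one.trans ht) _)) hpos).ne'
    exact (log_toReal_div_log_le ht hp hle).trans_lt hn

end LogAsymptotics

/-- Theorem (upper deviation, power-law regime, pinned):
for `d ≥ 3`, `0 < α < d/2` and `max(1/α,1) < ρ < d/(2α)`, ℙ-a.s.
`P₀(A(t) ≥ t^ρ, S_t = 0) = t^{-αρ+1-d/2+o(1)}` as `t → ∞`. -/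
theorem stmt1 (d : ℕ) (hd : 3 ≤ d) (α ρ : ℝ) (hα : 0 < α) (hαd : α < d / 2)
    (hρ₁ : max (1 / α) 1 < ρ) (hρ₂ : ρ < d / (2 * α))
    {Ωz Ωw : Type*} [MeasurableSpace Ωz] [MeasurableSpace Ωw]
    (μ : Measure Ωz) (z : (Fin d → ℤ) → Ωz → ℝ) (hz : IsScenery d α μ z)
    (P : (Fin d → ℤ) → Measure Ωw) (S : ℝ → Ωw → (Fin d → ℤ)) (hS : IsCTSRW d P S) :
    ∀ᵐ ζ ∂ μ, Tendsto
      (fun t : ℝ => Real.log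
          ((P 0) {ω | t ^ ρ ≤ rwrs d z S t ζ ω ∧ S t ω = 0}).toReal / Real.log t)
      atTop (nhds (-(α * ρ) + 1 - d / 2)) := by
  exact ae_tendsto_log_toReal_div_log
    (fun _ hv => hS.ae_eventually_measure_rwrs_and_eq_le hz hd hα hρ₁ hv)
    (fun _ hv => hS.ae_eventually_le_measure_rwrs_and_eq hz hd hα
      ((le_max_left _ _).trans_lt hρ₁) hρ₂ hv)
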